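/- arXiv:2109.01027 — 4 statements merged into one kernel-verified Lean document; each statement's English description precedes it below -/
import Mathlib

section
/- Let Ω ⊂ ℝ^N be a bounded domain, g : ℝ^N ∖ Ω → ℝ a bounded Borel measurable function and f : Ω → ℝ a bounded Borel measurable function. Then there exists a bounded Borel measurable function u : ℝ^N → ℝ with u = g on ℝ^N ∖ Ω satisfying the dynamic programming principle u(x) = α ∫ u(x+εz) dν_x(z) + β ⨍_{B_ε(x)} u(y) dy + ε² f(x) for every x ∈ Ω. -/
/-
The equation says that `u` is invariant, up to a source, under one step of a random walk: from
`x ∈ D` the walk jumps by `ε z` with `z ∼ ν x` with probability `1 - β`, and uniformly in the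
`ε`-ball with probability `β`. Let `L` be a nonzero linear functional. Whatever `ν x` is, the
uniform part makes `L` increase by a fixed `δ` with a fixed positive probability, so that
`exp (l L)`, cut off above `D`, at least doubles in mean for `l` large. Once normalised to be at
least `1` on `D` and subtracted from a constant, it becomes a bounded function that loses at least
`1` in mean at each step from `D`, and a multiple of that is a barrier `Φ` for the given data. The
operator of the equation preserves `{u | |u| ≤ Φ}`, and its iterates from `-Φ` increase to a
solution.
-/

open MeasureTheory Metric

noncomputable section

section DirichletProblem

open Filter ProbabilityTheory Topology

variable {X : Type*} [MeasurableSpace X] {κ : Kernel X X} {D : Set X} {h g Φ : X → ℝ}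

open scoped Classical in
/-- The operator whose fixed points solve the Dirichlet problem `u = κ u + h` in `D`, `u = g` off
`D`. -/
def dirichletOperator (κ : Kernel X X) (D : Set X) (h g u : X → ℝ) : X → ℝ :=
  D.piecewise (fun x => ∫ y, u y ∂κ x + h x) g

/-- The measurable functions dominated by `Φ`, on which the Dirichlet operator is iterated. -/
def dominatedBy (Φ : X → ℝ) : Set (X → ℝ) :=
  {u | Measurable u ∧ ∀ y, |u y| ≤ Φ y}

/-- A barrier for the Dirichlet problem `u = κ u + h` in `D`, `u = g` off `D`: a nonnegative
supersolution for the data `|h|`, `|g|`. It bounds the iterates of the Dirichlet operator. -/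
structure IsBarrier (κ : Kernel X X) (D : Set X) (h g Φ : X → ℝ) : Prop where
  measurable : Measurable Φ
  nonneg : ∀ x, 0 ≤ Φ x
  integrable : ∀ x ∈ D, Integrable Φ (κ x)
  interior : ∀ x ∈ D, ∫ y, Φ y ∂κ x + |h x| ≤ Φ x
  boundary : ∀ x ∉ D, |g x| ≤ Φ x

lemma dirichletOperator_of_mem (u : X → ℝ) {x : X} (hx : x ∈ D) :
    dirichletOperator κ D h g u x = ∫ y, u y ∂κ x + h x := by
  classical exact Set.piecewise_eq_of_mem D _ _ hx

lemma dirichletOperator_of_notMem (u : X → ℝ) {x : X} (hx : x ∉ D) :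
    dirichletOperator κ D h g u x = g x := by
  classical exact Set.piecewise_eq_of_notMem D _ _ hx

lemma measurable_dirichletOperator [IsSFiniteKernel κ] (hD : MeasurableSet D) (hh : Measurable h)
    (hg : Measurable g) {u : X → ℝ} (hu : Measurable u) :
    Measurable (dirichletOperator κ D h g u) := by
  classical
  have hint : Measurable fun x => ∫ y, u y ∂κ x := hu.stronglyMeasurable.integral_kernel.measurable
  exact (hint.add hh).piecewise hD hg

namespace IsBarrier

lemma integrable_of_mem (hΦ : IsBarrier κ D h g Φ) {u : X → ℝ} (hu : u ∈ dominatedBy Φ) {x : X}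
    (hx : x ∈ D) : Integrable u (κ x) :=
  (hΦ.integrable x hx).mono' hu.1.aestronglyMeasurable (ae_of_all _ hu.2)

lemma neg_mem_dominatedBy (hΦ : IsBarrier κ D h g Φ) : -Φ ∈ dominatedBy Φ :=
  ⟨hΦ.measurable.neg, fun y => by rw [Pi.neg_apply, abs_neg, abs_of_nonneg (hΦ.nonneg y)]⟩

lemma abs_dirichletOperator_le (hΦ : IsBarrier κ D h g Φ) {u : X → ℝ} (hu : u ∈ dominatedBy Φ)
    (x : X) : |dirichletOperator κ D h g u x| ≤ Φ x := by
  by_cases hx : x ∈ D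
  · rw [dirichletOperator_of_mem u hx]
    calc |∫ y, u y ∂κ x + h x| ≤ |∫ y, u y ∂κ x| + |h x| := abs_add_le _ _
      _ ≤ ∫ y, |u y| ∂κ x + |h x| := by gcongr; exact abs_integral_le_integral_abs
      _ ≤ ∫ y, Φ y ∂κ x + |h x| := by
        gcongr
        · exact (hΦ.integrable_of_mem hu hx).abs
        · exact hΦ.integrable x hx
        · exact fun y => hu.2 y
      _ ≤ Φ x := hΦ.interior x hx
  · rw [dirichletOperator_of_notMem u hx]
    exact hΦ.boundary x hx

lemma mapsTo_dirichletOperator [IsSFiniteKernel κ] (hΦ : IsBarrier κ D h g Φ)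
    (hD : MeasurableSet D) (hh : Measurable h) (hg : Measurable g) :
    Set.MapsTo (dirichletOperator κ D h g) (dominatedBy Φ) (dominatedBy Φ) := fun _ hu =>
  ⟨measurable_dirichletOperator hD hh hg hu.1, hΦ.abs_dirichletOperator_le hu⟩

lemma monotoneOn_dirichletOperator (hΦ : IsBarrier κ D h g Φ) :
    MonotoneOn (dirichletOperator κ D h g) (dominatedBy Φ) := by
  intro u hu v hv huv x
  by_cases hx : x ∈ D
  · simp only [dirichletOperator_of_mem _ hx]
    have := integral_mono (hΦ.integrable_of_mem hu hx) (hΦ.integrable_of_mem hv hx) huv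
    gcongr
  · simp only [dirichletOperator_of_notMem _ hx, le_refl]

lemma tendsto_dirichletOperator (hΦ : IsBarrier κ D h g Φ) {U : ℕ → X → ℝ} {u : X → ℝ}
    (hU : ∀ n, U n ∈ dominatedBy Φ) (hlim : Tendsto U atTop (𝓝 u)) :
    Tendsto (fun n => dirichletOperator κ D h g (U n)) atTop (𝓝 (dirichletOperator κ D h g u)) := by
  rw [tendsto_pi_nhds] at hlim ⊢
  intro x
  by_cases hx : x ∈ D
  · simp only [dirichletOperator_of_mem _ hx]
    exact (tendsto_integral_of_dominated_convergence Φ (fun n => (hU n).1.aestronglyMeasurable)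
      (hΦ.integrable x hx) (fun n => ae_of_all _ (hU n).2) (ae_of_all _ hlim)).add_const _
  · simp only [dirichletOperator_of_notMem _ hx, tendsto_const_nhds]

end IsBarrier

lemma mem_dominatedBy_of_tendsto {U : ℕ → X → ℝ} {u : X → ℝ} (hU : ∀ n, U n ∈ dominatedBy Φ)
    (hlim : Tendsto U atTop (𝓝 u)) : u ∈ dominatedBy Φ :=
  ⟨measurable_of_tendsto_metrizable (fun n => (hU n).1) hlim, fun y =>
    le_of_tendsto (tendsto_pi_nhds.1 hlim y).abs (Eventually.of_forall fun n => (hU n).2 y)⟩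

lemma exists_tendsto_of_monotone_of_mem_dominatedBy {U : ℕ → X → ℝ} (hmono : Monotone U)
    (hU : ∀ n, U n ∈ dominatedBy Φ) : ∃ u, Tendsto U atTop (𝓝 u) :=
  ⟨⨆ n, U n, tendsto_atTop_ciSup hmono ⟨Φ, Set.forall_mem_range.2 fun n y =>
    (le_abs_self _).trans ((hU n).2 y)⟩⟩

theorem IsBarrier.exists_fixedPoint [IsSFiniteKernel κ] (hΦ : IsBarrier κ D h g Φ)
    (hD : MeasurableSet D) (hh : Measurable h) (hg : Measurable g) :
    ∃ u ∈ dominatedBy Φ, dirichletOperator κ D h g u = u := by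
  let T : dominatedBy Φ → dominatedBy Φ := (hΦ.mapsTo_dirichletOperator hD hh hg).restrict
  let U : ℕ → dominatedBy Φ := fun n => T^[n] ⟨-Φ, hΦ.neg_mem_dominatedBy⟩
  have hT : Monotone T := fun u v huv => hΦ.monotoneOn_dirichletOperator u.2 v.2 huv
  have hstart : ⟨-Φ, hΦ.neg_mem_dominatedBy⟩ ≤ T ⟨-Φ, hΦ.neg_mem_dominatedBy⟩ := fun y =>
    (abs_le.1 (hΦ.abs_dirichletOperator_le hΦ.neg_mem_dominatedBy y)).1
  have hU : Monotone U := hT.monotone_iterate_of_le_map hstart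
  obtain ⟨u, hlim⟩ :=
    exists_tendsto_of_monotone_of_mem_dominatedBy (U := fun n => (U n : X → ℝ)) hU fun n => (U n).2
  have hsucc : ∀ n, (U (n + 1) : X → ℝ) = dirichletOperator κ D h g (U n) := fun n =>
    congrArg Subtype.val (Function.iterate_succ_apply' T n _)
  refine ⟨u, mem_dominatedBy_of_tendsto (fun n => (U n).2) hlim, tendsto_nhds_unique
    (hΦ.tendsto_dirichletOperator (fun n => (U n).2) hlim) ?_⟩
  simpa only [hsucc] using (tendsto_add_atTop_iff_nat 1).2 hlim

end DirichletProblem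

section Escape

open ProbabilityTheory

variable {X : Type*} {ℓ : X → ℝ} {a b l δ q : ℝ}

/-- The exponential weight of `ℓ` at rate `l`, with `ℓ` measured from `a` and cut off at `b`. It
grows in mean along a walk that raises `ℓ`. -/
def expWeight (ℓ : X → ℝ) (l a b : ℝ) (y : X) : ℝ :=
  Real.exp (l * (min (ℓ y) b - a))

lemma expWeight_le (hl : 0 ≤ l) (y : X) : expWeight ℓ l a b y ≤ Real.exp (l * (b - a)) := by
  unfold expWeight
  gcongr
  exact min_le_right _ _

lemma one_le_expWeight (hl : 0 ≤ l) {x : X} (hax : a ≤ ℓ x) (hab : a ≤ b) :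
    1 ≤ expWeight ℓ l a b x :=
  Real.one_le_exp (mul_nonneg hl (sub_nonneg.2 (le_min hax hab)))

lemma exists_two_le_mul_exp (hδ : 0 < δ) (hq : 0 < q) : ∃ l, 0 ≤ l ∧ 2 ≤ q * Real.exp (l * δ) := by
  refine ⟨2 / q / δ, by positivity, ?_⟩
  calc 2 = q * (2 / q) := (mul_div_cancel₀ 2 hq.ne').symm
    _ ≤ q * Real.exp (2 / q) := by
      gcongr
      linarith [Real.add_one_le_exp (2 / q)]
    _ = q * Real.exp (2 / q / δ * δ) := by rw [div_mul_cancel₀ _ hδ.ne']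

variable [MeasurableSpace X]

lemma measurable_expWeight (hℓ : Measurable ℓ) : Measurable (expWeight ℓ l a b) := by
  unfold expWeight
  fun_prop

lemma integrable_of_bounded {μ : Measure X} [IsFiniteMeasure μ] {w : X → ℝ} (hw : Measurable w)
    (hwb : ∃ M, ∀ y, |w y| ≤ M) : Integrable w μ :=
  let ⟨M, hM⟩ := hwb
  .of_bound hw.aestronglyMeasurable M (ae_of_all _ hM)

lemma integrable_expWeight {μ : Measure X} [IsFiniteMeasure μ] (hℓ : Measurable ℓ) (hl : 0 ≤ l) :
    Integrable (expWeight ℓ l a b) μ :=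
  integrable_of_bounded (measurable_expWeight hℓ)
    ⟨_, fun y => (abs_of_pos (Real.exp_pos _)).trans_le (expWeight_le hl y)⟩

lemma measureReal_mul_exp_le_integral_expWeight {μ : Measure X} [IsFiniteMeasure μ]
    (hℓ : Measurable ℓ) (hl : 0 ≤ l) {t : ℝ} (htb : t ≤ b) :
    μ.real {y | t ≤ ℓ y} * Real.exp (l * (t - a)) ≤ ∫ y, expWeight ℓ l a b y ∂μ := by
  have hsub : {y | t ≤ ℓ y} ⊆ {y | Real.exp (l * (t - a)) ≤ expWeight ℓ l a b y} := by
    intro y hy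
    simp only [Set.mem_ofPred_eq, expWeight]
    gcongr
    exact le_min hy htb
  calc μ.real {y | t ≤ ℓ y} * Real.exp (l * (t - a))
      ≤ Real.exp (l * (t - a)) * μ.real {y | Real.exp (l * (t - a)) ≤ expWeight ℓ l a b y} := by
        rw [mul_comm]
        gcongr
        exact measure_ne_top _ _
    _ ≤ ∫ y, expWeight ℓ l a b y ∂μ :=
      mul_meas_ge_le_integral_of_nonneg (ae_of_all _ fun _ => (Real.exp_pos _).le)
        (integrable_expWeight hℓ hl) _

lemma two_mul_expWeight_le_integral {μ : Measure X} [IsFiniteMeasure μ] (hℓ : Measurable ℓ)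
    (hl : 0 ≤ l) (hlq : 2 ≤ q * Real.exp (l * δ)) {x : X} (hxb : ℓ x + δ ≤ b)
    (hesc : q ≤ μ.real {y | ℓ x + δ ≤ ℓ y}) :
    2 * expWeight ℓ l a b x ≤ ∫ y, expWeight ℓ l a b y ∂μ :=
  calc 2 * expWeight ℓ l a b x ≤ q * Real.exp (l * δ) * Real.exp (l * (ℓ x - a)) := by
        unfold expWeight
        gcongr
        exact min_le_left _ _
    _ = q * Real.exp (l * (ℓ x + δ - a)) := by
        rw [mul_assoc, ← Real.exp_add]
        ring_nf
    _ ≤ μ.real {y | ℓ x + δ ≤ ℓ y} * Real.exp (l * (ℓ x + δ - a)) := by gcongr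
    _ ≤ ∫ y, expWeight ℓ l a b y ∂μ := measureReal_mul_exp_le_integral_expWeight hℓ hl hxb

variable {κ : Kernel X X} {D : Set X} {h g : X → ℝ}

theorem exists_drift_function [IsMarkovKernel κ] (hℓ : Measurable ℓ) (hδ : 0 < δ) (hq : 0 < q)
    (hℓD : ∀ x ∈ D, ℓ x ∈ Set.Icc a b) (hesc : ∀ x ∈ D, q ≤ (κ x).real {y | ℓ x + δ ≤ ℓ y}) :
    ∃ φ : X → ℝ, Measurable φ ∧ (∀ y, 1 ≤ φ y) ∧ (∃ C, ∀ y, φ y ≤ C) ∧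
      ∀ x ∈ D, ∫ y, φ y ∂κ x + 1 ≤ φ x := by
  obtain ⟨l, hl, hlq⟩ := exists_two_le_mul_exp hδ hq
  let ψ := expWeight ℓ l a (b + δ)
  let C := Real.exp (l * (b + δ - a)) + 1
  refine ⟨fun y => C - ψ y, measurable_const.sub (measurable_expWeight hℓ),
    fun y => le_sub_comm.1 ((expWeight_le hl y).trans_eq (add_sub_cancel_right _ 1).symm),
    ⟨C, fun y => sub_le_self C (Real.exp_pos _).le⟩, fun x hx => ?_⟩
  obtain ⟨hax, hxb⟩ := hℓD x hx
  have hdouble : 2 * ψ x ≤ ∫ y, ψ y ∂κ x :=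
    two_mul_expWeight_le_integral hℓ hl hlq (by gcongr) (hesc x hx)
  have hone : 1 ≤ ψ x := one_le_expWeight hl hax (by linarith)
  rw [integral_sub (integrable_const C) (integrable_expWeight hℓ hl), integral_const,
    probReal_univ, one_smul]
  linarith

lemma exists_isBarrier_of_drift [IsFiniteKernel κ] {φ : X → ℝ} (hφ : Measurable φ)
    (hone : ∀ y, 1 ≤ φ y) (hφb : ∃ C, ∀ y, φ y ≤ C) (hdrift : ∀ x ∈ D, ∫ y, φ y ∂κ x + 1 ≤ φ x)
    (hhb : ∃ M, ∀ y, |h y| ≤ M) (hgb : ∃ M, ∀ y, |g y| ≤ M) :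
    ∃ Φ, IsBarrier κ D h g Φ ∧ ∃ C, ∀ y, Φ y ≤ C := by
  obtain ⟨C, hC⟩ := hφb
  obtain ⟨H, hH⟩ := hhb
  obtain ⟨G, hG⟩ := hgb
  let A := max 0 (max H G)
  have hA : 0 ≤ A := le_max_left _ _
  have hφ_nonneg : ∀ y, 0 ≤ φ y := fun y => zero_le_one.trans (hone y)
  have hφi : ∀ x, Integrable φ (κ x) := fun x =>
    integrable_of_bounded hφ ⟨C, fun y => (abs_of_nonneg (hφ_nonneg y)).trans_le (hC y)⟩
  refine ⟨fun y => A * φ y, ⟨hφ.const_mul A, fun y => mul_nonneg hA (hφ_nonneg y),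
    fun x _ => (hφi x).const_mul A, fun x hx => ?_, fun x _ => ?_⟩, A * C,
    fun y => mul_le_mul_of_nonneg_left (hC y) hA⟩
  · calc ∫ y, A * φ y ∂κ x + |h x| ≤ A * ∫ y, φ y ∂κ x + A := by
          rw [integral_const_mul]
          gcongr
          exact (hH x).trans ((le_max_left _ _).trans (le_max_right _ _))
      _ = A * (∫ y, φ y ∂κ x + 1) := by ring
      _ ≤ A * φ x := by gcongr; exact hdrift x hx
  · calc |g x| ≤ A := (hG x).trans ((le_max_right _ _).trans (le_max_right _ _))
      _ ≤ A * φ x := le_mul_of_one_le_right hA (hone x)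

theorem exists_bounded_solution_of_escape [IsMarkovKernel κ] (hℓ : Measurable ℓ) (hδ : 0 < δ)
    (hq : 0 < q) (hℓD : ∀ x ∈ D, ℓ x ∈ Set.Icc a b)
    (hesc : ∀ x ∈ D, q ≤ (κ x).real {y | ℓ x + δ ≤ ℓ y}) (hD : MeasurableSet D)
    (hh : Measurable h) (hhb : ∃ M, ∀ y, |h y| ≤ M)
    (hg : Measurable g) (hgb : ∃ M, ∀ y, |g y| ≤ M) :
    ∃ u : X → ℝ, Measurable u ∧ (∃ M, ∀ y, |u y| ≤ M) ∧ (∀ x ∉ D, u x = g x) ∧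
      ∀ x ∈ D, u x = ∫ y, u y ∂κ x + h x := by
  obtain ⟨φ, hφ, hone, hφb, hdrift⟩ := exists_drift_function hℓ hδ hq hℓD hesc
  obtain ⟨Φ, hΦ, C, hC⟩ := exists_isBarrier_of_drift hφ hone hφb hdrift hhb hgb
  obtain ⟨u, ⟨hu, huΦ⟩, hfix⟩ := hΦ.exists_fixedPoint hD hh hg
  refine ⟨u, hu, ⟨C, fun y => (huΦ y).trans (hC y)⟩, fun x hx => ?_, fun x hx => ?_⟩
  · rw [← congrFun hfix x, dirichletOperator_of_notMem u hx]
  · rw [← dirichletOperator_of_mem u hx, hfix]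

end Escape

section RandomWalk

open ProbabilityTheory Set

lemma measurable_measure_of_measurable_integral {X Y : Type*} [MeasurableSpace X]
    [MeasurableSpace Y] {κ : X → Measure Y} [∀ x, IsFiniteMeasure (κ x)]
    (hκ : ∀ w : Y → ℝ, Measurable w → (∃ M, ∀ y, |w y| ≤ M) → Measurable fun x => ∫ y, w y ∂κ x) :
    Measurable κ := by
  refine Measure.measurable_of_measurable_coe κ fun s hs => ?_
  have hreal : Measurable fun x => (κ x).real s := by
    simpa only [integral_indicator_one hs] using
      hκ (s.indicator 1) (measurable_one.indicator hs) ⟨1, fun y => by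
        by_cases hy : y ∈ s <;> simp [hy]⟩
  simpa only [ofReal_measureReal (measure_ne_top _ s)] using hreal.ennreal_ofReal

lemma measurable_kernel_map {X Y Z : Type*} [MeasurableSpace X] [MeasurableSpace Y]
    [MeasurableSpace Z] (κ : Kernel X Y) [IsSFiniteKernel κ] {f : X → Y → Z}
    (hf : Measurable (Function.uncurry f)) : Measurable fun x => (κ x).map (f x) := by
  refine Measure.measurable_of_measurable_coe _ fun s hs => ?_
  simp only [Measure.map_apply (hf.of_uncurry_left) hs]
  exact Kernel.measurable_kernel_prodMk_left (hf hs)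

/-- The kernel that chooses `κ` with probability `1 - p` and `η` with probability `p`, for
`p ∈ [0, 1]`. -/
def mixtureKernel {X Y : Type*} [MeasurableSpace X] [MeasurableSpace Y] (p : ℝ)
    (κ η : Kernel X Y) : Kernel X Y where
  toFun x := ENNReal.ofReal (1 - p) • κ x + ENNReal.ofReal p • η x
  measurable' := Measure.measurable_of_measurable_coe _ fun _ hs =>
    ((κ.measurable_coe hs).const_mul _).add ((η.measurable_coe hs).const_mul _)

section Mixture

variable {X Y : Type*} [MeasurableSpace X] [MeasurableSpace Y] {p : ℝ} {κ η : Kernel X Y}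

lemma mixtureKernel_apply (x : X) :
    mixtureKernel p κ η x = ENNReal.ofReal (1 - p) • κ x + ENNReal.ofReal p • η x := rfl

lemma isMarkovKernel_mixtureKernel [IsMarkovKernel κ] [IsMarkovKernel η] (hp : p ∈ Icc (0 : ℝ) 1) :
    IsMarkovKernel (mixtureKernel p κ η) where
  isProbabilityMeasure x := ⟨by
    simp only [mixtureKernel_apply, Measure.add_apply, Measure.smul_apply, measure_univ,
      smul_eq_mul, mul_one]
    rw [← ENNReal.ofReal_add (sub_nonneg.2 hp.2) hp.1, sub_add_cancel, ENNReal.ofReal_one]⟩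

lemma integral_mixtureKernel (hp : p ∈ Icc (0 : ℝ) 1) {x : X} {w : Y → ℝ}
    (hκ : Integrable w (κ x)) (hη : Integrable w (η x)) :
    ∫ y, w y ∂mixtureKernel p κ η x = (1 - p) * ∫ y, w y ∂κ x + p * ∫ y, w y ∂η x := by
  rw [mixtureKernel_apply, integral_add_measure (hκ.smul_measure ENNReal.ofReal_ne_top)
    (hη.smul_measure ENNReal.ofReal_ne_top), integral_smul_measure, integral_smul_measure,
    ENNReal.toReal_ofReal (sub_nonneg.2 hp.2), ENNReal.toReal_ofReal hp.1, smul_eq_mul, smul_eq_mul]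

lemma mixtureKernel_real_apply [IsFiniteKernel κ] [IsFiniteKernel η] (hp : p ∈ Icc (0 : ℝ) 1)
    (x : X) (s : Set Y) :
    (mixtureKernel p κ η x).real s = (1 - p) * (κ x).real s + p * (η x).real s := by
  have hfin : ∀ (r : ℝ) (μ : Measure Y) [IsFiniteMeasure μ], (ENNReal.ofReal r • μ) s ≠ ⊤ :=
    fun r μ _ => ENNReal.mul_ne_top ENNReal.ofReal_ne_top (measure_ne_top μ s)
  rw [mixtureKernel_apply, measureReal_add_apply (hfin _ _) (hfin _ _),
    measureReal_ennreal_smul_apply, measureReal_ennreal_smul_apply,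
    ENNReal.toReal_ofReal (sub_nonneg.2 hp.2), ENNReal.toReal_ofReal hp.1]

end Mixture

section Walk

variable {E : Type*} [AddGroup E] [MeasurableSpace E] [MeasurableAdd₂ E]

/-- The transition kernel of the random walk whose step from `x` has law `ρ x`. -/
def walkKernel (ρ : Kernel E E) [IsSFiniteKernel ρ] : Kernel E E where
  toFun x := (ρ x).map (x + ·)
  measurable' := measurable_kernel_map ρ measurable_add

variable {ρ : Kernel E E}

instance [IsMarkovKernel ρ] : IsMarkovKernel (walkKernel ρ) where
  isProbabilityMeasure x :=
    Measure.isProbabilityMeasure_map (measurable_const_add x).aemeasurable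

lemma integral_walkKernel [IsSFiniteKernel ρ] (x : E) (w : E → ℝ) :
    ∫ y, w y ∂walkKernel ρ x = ∫ z, w (x + z) ∂ρ x :=
  (measurableEmbedding_addLeft x).integral_map w

lemma walkKernel_real_apply [IsSFiniteKernel ρ] (x : E) {s : Set E} (hs : MeasurableSet s) :
    (walkKernel ρ x).real s = (ρ x).real ((x + ·) ⁻¹' s) :=
  map_measureReal_apply (measurable_const_add x) hs

lemma measurable_of_measurable_integral_add [MeasurableNeg E] {ν : E → Measure E}
    [∀ x, IsProbabilityMeasure (ν x)]
    (hν : ∀ w : E → ℝ, Measurable w → (∃ M, ∀ y, |w y| ≤ M) →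
      Measurable fun x => ∫ z, w (x + z) ∂ν x) : Measurable ν := by
  have hprob : ∀ x, IsProbabilityMeasure ((ν x).map (x + ·)) := fun x =>
    Measure.isProbabilityMeasure_map (measurable_const_add x).aemeasurable
  let κ : Kernel E E := ⟨fun x => (ν x).map (x + ·),
    measurable_measure_of_measurable_integral fun w hw hwb => by
      simpa only [(measurableEmbedding_addLeft _).integral_map] using hν w hw hwb⟩
  have : IsMarkovKernel κ := ⟨hprob⟩
  have hνκ : ν = fun x => (κ x).map (-x + ·) := by
    funext x
    change ν x = ((ν x).map (x + ·)).map (-x + ·)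
    rw [Measure.map_map (measurable_const_add _) (measurable_const_add _)]
    simp only [Function.comp_def, neg_add_cancel_left, Measure.map_id']
  rw [hνκ]
  exact measurable_kernel_map κ (measurable_fst.neg.add measurable_snd)

end Walk

end RandomWalk

section DynamicProgramming

open ProbabilityTheory

lemma setAverage_add_const {X : Type*} [MeasurableSpace X] {μ : Measure X} {s : Set X}
    (hs₀ : μ s ≠ 0) (hs : μ s ≠ ⊤) {u : X → ℝ} (hu : IntegrableOn u s μ) (c : ℝ) :
    ⨍ y in s, (u y + c) ∂μ = ⨍ y in s, u y ∂μ + c := by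
  rw [setAverage_eq, integral_add hu (integrableOn_const hs), smul_add, ← setAverage_eq,
    ← setAverage_eq, setAverage_const hs₀ hs]

lemma setAverage_ball_eq_integral_cond {E : Type*} [NormedAddCommGroup E] [MeasurableSpace E]
    [BorelSpace E] (μ : Measure E) [μ.IsAddLeftInvariant] (x : E) (r : ℝ) (w : E → ℝ) :
    ⨍ y in ball x r, w y ∂μ = ∫ z, w (x + z) ∂μ[|ball 0 r] := by
  have hball : (x + ·) ⁻¹' ball x r = ball 0 r := by rw [preimage_add_ball, sub_self]
  have hpres := measurePreserving_add_left μ x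
  rw [setAverage_eq', ProbabilityTheory.cond, integral_smul_measure, integral_smul_measure,
    ← hpres.measure_preimage measurableSet_ball.nullMeasurableSet,
    ← hpres.setIntegral_preimage_emb (measurableEmbedding_addLeft x), hball]

variable {E : Type*} [NormedAddCommGroup E] [NormedSpace ℝ E] [MeasurableSpace E] [BorelSpace E]

lemma exists_functional_measureReal_cond_ball_pos [Nontrivial E] (μ : Measure E)
    [μ.IsOpenPosMeasure] {r : ℝ} (hr : 0 < r) (hμr : μ (ball 0 r) ≠ ⊤) :
    ∃ L : E →L[ℝ] ℝ, ∃ δ, 0 < δ ∧ 0 < μ[|ball 0 r].real {z | δ ≤ L z} := by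
  obtain ⟨v, hv0, hvr⟩ : ∃ v ∈ ({0}ᶜ : Set E), v ∈ ball 0 r :=
    (dense_compl_singleton (0 : E)).exists_mem_open isOpen_ball ⟨0, mem_ball_self hr⟩
  obtain ⟨L, hLv⟩ := SeparatingDual.exists_eq_one (R := ℝ) hv0
  have hopen : 0 < μ (ball 0 r ∩ L ⁻¹' Set.Ioi (1 / 2)) :=
    (isOpen_ball.inter (isOpen_Ioi.preimage L.continuous)).measure_pos μ
      ⟨v, hvr, by norm_num [hLv]⟩
  have hsub : ball 0 r ∩ L ⁻¹' Set.Ioi (1 / 2) ⊆ ball 0 r ∩ {z | 1 / 2 ≤ L z} :=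
    Set.inter_subset_inter_right _ fun _ => le_of_lt (α := ℝ)
  refine ⟨L, 1 / 2, by norm_num, ENNReal.toReal_pos ?_ (measure_ne_top _ _)⟩
  rw [cond_apply measurableSet_ball]
  exact mul_ne_zero (ENNReal.inv_ne_zero.2 hμr) (hopen.trans_le (measure_mono hsub)).ne'

/-- The law of one step in the dynamic programming principle: with probability `1 - β`, `ε` times a
sample of `ν x`, and with probability `β`, a uniform point of the `ε`-ball. -/
def dppStep (ν : Kernel E E) (μ : Measure E) (β ε : ℝ) : Kernel E E :=
  mixtureKernel β (ν.map (ε • ·)) (Kernel.const E μ[|ball 0 ε])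

variable {ν : Kernel E E} {μ : Measure E} {β ε : ℝ}

lemma isMarkovKernel_dppStep [IsMarkovKernel ν] [IsProbabilityMeasure μ[|ball 0 ε]]
    (hβ : β ∈ Set.Icc (0 : ℝ) 1) : IsMarkovKernel (dppStep ν μ β ε) :=
  have := Kernel.IsMarkovKernel.map ν (measurable_const_smul (α := E) ε)
  isMarkovKernel_mixtureKernel hβ

lemma mul_cond_ball_real_le_dppStep [IsMarkovKernel ν] (hβ : β ∈ Set.Icc (0 : ℝ) 1) (x : E)
    (s : Set E) : β * μ[|ball 0 ε].real s ≤ (dppStep ν μ β ε x).real s := by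
  have := Kernel.IsMarkovKernel.map ν (measurable_const_smul (α := E) ε)
  rw [dppStep, mixtureKernel_real_apply hβ, Kernel.const_apply]
  exact le_add_of_nonneg_left (mul_nonneg (sub_nonneg.2 hβ.2) measureReal_nonneg)

lemma integral_dppStep [IsMarkovKernel ν] [μ.IsAddLeftInvariant]
    (hβ : β ∈ Set.Icc (0 : ℝ) 1) {u : E → ℝ} (hu : Measurable u) (hub : ∃ M, ∀ y, |u y| ≤ M)
    (x : E) :
    ∫ z, u (x + z) ∂dppStep ν μ β ε x =
      (1 - β) * ∫ z, u (x + ε • z) ∂ν x + β * ⨍ y in ball x ε, u y ∂μ := by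
  have hsmul : Measurable (ε • · : E → E) := measurable_const_smul ε
  have := Kernel.IsMarkovKernel.map ν hsmul
  have hux : Measurable fun z => u (x + z) := hu.comp (measurable_const_add x)
  have hint : ∀ (θ : Measure E) [IsFiniteMeasure θ], Integrable (fun z => u (x + z)) θ :=
    fun _ _ => integrable_of_bounded hux (hub.imp fun _ hM y => hM (x + y))
  rw [dppStep, integral_mixtureKernel hβ (hint _) (hint _), Kernel.const_apply,
    setAverage_ball_eq_integral_cond, Kernel.map_apply _ hsmul,
    integral_map hsmul.aemeasurable hux.aestronglyMeasurable]

theorem exists_bounded_solution_dppStep [Nontrivial E] [SecondCountableTopology E]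
    (μ : Measure E) [μ.IsOpenPosMeasure] [IsMarkovKernel ν] (hβ : β ∈ Set.Ioc (0 : ℝ) 1)
    (hε : 0 < ε) (hμε : μ (ball 0 ε) ≠ ⊤) {D : Set E} (hD : MeasurableSet D)
    (hDb : Bornology.IsBounded D) {h g : E → ℝ} (hh : Measurable h) (hhb : ∃ M, ∀ y, |h y| ≤ M)
    (hg : Measurable g) (hgb : ∃ M, ∀ y, |g y| ≤ M) :
    ∃ u : E → ℝ, Measurable u ∧ (∃ M, ∀ y, |u y| ≤ M) ∧ (∀ x ∉ D, u x = g x) ∧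
      ∀ x ∈ D, u x = ∫ z, u (x + z) ∂dppStep ν μ β ε x + h x := by
  have hβ' := Set.Ioc_subset_Icc_self hβ
  have : IsProbabilityMeasure μ[|ball 0 ε] :=
    cond_isProbabilityMeasure_of_finite (measure_ball_pos μ 0 hε).ne' hμε
  have := isMarkovKernel_dppStep (ν := ν) (μ := μ) (ε := ε) hβ'
  obtain ⟨L, δ, hδ, hL⟩ := exists_functional_measureReal_cond_ball_pos μ hε hμε
  obtain ⟨R, hR⟩ := hDb.exists_norm_le
  have hLD : ∀ x ∈ D, L x ∈ Set.Icc (-(‖L‖ * R)) (‖L‖ * R) := fun x hx =>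
    abs_le.1 (L.le_opNorm_of_le (hR x hx))
  have hesc : ∀ x ∈ D, β * μ[|ball 0 ε].real {z | δ ≤ L z} ≤
      (walkKernel (dppStep ν μ β ε) x).real {y | L x + δ ≤ L y} := by
    intro x _
    have hpre : (x + ·) ⁻¹' {y | L x + δ ≤ L y} = {z | δ ≤ L z} := by
      ext z
      simp only [Set.mem_preimage, Set.mem_ofPred_eq, map_add, add_le_add_iff_left]
    rw [walkKernel_real_apply x (measurableSet_le measurable_const L.continuous.measurable), hpre]
    exact mul_cond_ball_real_le_dppStep hβ' x _
  simpa only [integral_walkKernel] using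
    exists_bounded_solution_of_escape L.continuous.measurable hδ (mul_pos hβ.1 hL) hLD hesc hD
      hh hhb hg hgb

/-- Unlike in the usual form of the principle, the source lies inside the average, as in
`DPP_existence`, where `⨍` extends over the whole sum; it thus enters with the factor `β`. -/
theorem DPP_existence_general {E : Type*} [NormedAddCommGroup E] [NormedSpace ℝ E]
    [FiniteDimensional ℝ E] [Nontrivial E] [MeasurableSpace E] [BorelSpace E] (μ : Measure E)
    [μ.IsAddHaarMeasure] {β ε : ℝ} (hβ : β ∈ Set.Ioc (0 : ℝ) 1) (hε : 0 < ε) (ν : E → Measure E)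
    [∀ x, IsProbabilityMeasure (ν x)]
    (hmeas : ∀ w : E → ℝ, Measurable w → (∃ M, ∀ y, |w y| ≤ M) →
      Measurable fun x => ∫ z, w (x + z) ∂ν x)
    {D : Set E} (hD : MeasurableSet D) (hDb : Bornology.IsBounded D) {g f : E → ℝ}
    (hg : Measurable g) (hgb : ∃ M, ∀ y, |g y| ≤ M)
    (hf : Measurable f) (hfb : ∃ M, ∀ y, |f y| ≤ M) :
    ∃ u : E → ℝ, Measurable u ∧ (∃ M, ∀ y, |u y| ≤ M) ∧ (∀ x ∉ D, u x = g x) ∧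
      ∀ x ∈ D, u x = (1 - β) * ∫ z, u (x + ε • z) ∂ν x +
        β * ⨍ y in ball x ε, (u y + ε ^ 2 * f x) ∂μ := by
  let ν' : Kernel E E := ⟨ν, measurable_of_measurable_integral_add hmeas⟩
  have : IsMarkovKernel ν' := ⟨inferInstance⟩
  have : ProperSpace E := FiniteDimensional.proper ℝ E
  obtain ⟨F, hF⟩ := hfb
  have hsource : ∃ M, ∀ y, |β * (ε ^ 2 * f y)| ≤ M := by
    refine ⟨|β| * (|ε ^ 2| * F), fun y => ?_⟩
    rw [abs_mul, abs_mul]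
    gcongr
    exact hF y
  obtain ⟨u, hu, hub, hug, huD⟩ := exists_bounded_solution_dppStep (ν := ν') μ hβ hε
    measure_ball_lt_top.ne hD hDb ((hf.const_mul (ε ^ 2)).const_mul β) hsource hg hgb
  refine ⟨u, hu, hub, hug, fun x hx => ?_⟩
  have hfin : μ (ball x ε) ≠ ⊤ := measure_ball_lt_top.ne
  have := Fact.mk hfin.lt_top
  rw [huD x hx, integral_dppStep (Set.Ioc_subset_Icc_self hβ) hu hub,
    setAverage_add_const (measure_ball_pos μ x hε).ne' hfin (integrable_of_bounded hu hub),
    mul_add, add_assoc]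
  rfl

end DynamicProgramming

/-- existence of a bounded Borel solution of the dynamic programming
principle with boundary values `g`. -/
theorem DPP_existence (N : ℕ) (hN : 1 ≤ N) (Λ β ε : ℝ) (hΛ : 1 ≤ Λ)
    (hβ : β ∈ Set.Ioc (0 : ℝ) 1) (hε : 0 < ε)
    (ν : EuclideanSpace ℝ (Fin N) → Measure (EuclideanSpace ℝ (Fin N)))
    (hprob : ∀ x, IsProbabilityMeasure (ν x))
    (hsupp : ∀ x, ν x (closedBall (0 : EuclideanSpace ℝ (Fin N)) Λ)ᶜ = 0)
    (hsymm : ∀ x (E : Set (EuclideanSpace ℝ (Fin N))), MeasurableSet E → ν x E = ν x (-E))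
    (hmeas : ∀ w : EuclideanSpace ℝ (Fin N) → ℝ, Measurable w → (∃ M, ∀ y, |w y| ≤ M) →
      Measurable fun x => ∫ z, w (x + z) ∂ν x)
    (D : Set (EuclideanSpace ℝ (Fin N))) (hD : IsOpen D) (hDc : IsConnected D)
    (hDb : Bornology.IsBounded D)
    (g f : EuclideanSpace ℝ (Fin N) → ℝ)
    (hg : Measurable g) (hgb : ∃ M, ∀ y, |g y| ≤ M)
    (hf : Measurable f) (hfb : ∃ M, ∀ y, |f y| ≤ M) :
    ∃ u : EuclideanSpace ℝ (Fin N) → ℝ,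
      Measurable u ∧ (∃ M, ∀ y, |u y| ≤ M) ∧
      (∀ x ∉ D, u x = g x) ∧
      (∀ x ∈ D, u x = (1 - β) * ∫ z, u (x + ε • z) ∂ν x +
        β * ⨍ y in ball x ε, u y + ε ^ 2 * f x) := by
  have : Nonempty (Fin N) := Fin.pos_iff_nonempty.1 hN
  exact DPP_existence_general volume hβ hε ν hmeas hD.measurableSet hDb hg hgb hf hfb
end
end

section
/- Let Ω ⊂ ℝ^N be a bounded domain and f : Ω → ℝ a bounded Borel measurable function. If u, v : ℝ^N → ℝ are bounded Borel measurable functions which agree on ℝ^N ∖ Ω and each w ∈ {u, v} satisfies the dynamic programming principle w(x) = α ∫ w(x+εz) dν_x(z) + β ⨍_{B_ε(x)} w(y) dy + ε² f(x) for every x ∈ Ω, then u = v on ℝ^N. -/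
open MeasureTheory Metric

noncomputable section

/-!
The equation says that `w x` is the mean of `w` after one random step from `x`, plus a source. The
source cancels in the difference of two solutions, so it is enough to prove a maximum principle
for random walks which leave `D`. With probability `β > 0` the step is uniform in `ball x ε`, and
then, with probability bounded below, it raises a fixed nonzero linear functional `L` by a fixed
height. Since `L` is bounded on `D`, a bounded number `n` of such climbs leads out of `D`, where the
difference vanishes. Hence the supremum `S` of the difference, if positive, satisfies
`S ≤ S * (1 - c ^ n)` for some `c > 0`, which is absurd.
-/

open ProbabilityTheory Set Topology

theorem integral_le_sub_mul_measureReal {X : Type*} [MeasurableSpace X] {κ : Measure X}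
    [IsProbabilityMeasure κ] {w : X → ℝ} (hw : Integrable w κ) {A : Set X} (hA : MeasurableSet A)
    {S a : ℝ} (hS : ∀ y, w y ≤ S) (ha : ∀ y ∈ A, w y ≤ a) :
    ∫ y, w y ∂κ ≤ S - (S - a) * κ.real A := by
  have hint : Integrable (A.indicator fun _ => S - a) κ := (integrable_const _).indicator hA
  calc ∫ y, w y ∂κ ≤ ∫ y, (S - A.indicator (fun _ => S - a) y) ∂κ := by
        refine integral_mono hw ((integrable_const S).sub hint) fun y => ?_
        by_cases hy : y ∈ A
        · simpa [hy] using ha y hy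
        · simpa [hy] using hS y
    _ = S - (S - a) * κ.real A := by
        rw [integral_sub (integrable_const S) hint, integral_indicator_const _ hA]
        simp [mul_comm]

section MaximumPrinciple

variable {X : Type*} [MeasurableSpace X] {κ : X → Measure X} [∀ x, IsProbabilityMeasure (κ x)]
  {D : Set X} {ψ : X → ℝ} {h c : ℝ}

theorem le_mul_one_sub_pow_of_climb (hψ : Measurable ψ) (hc₀ : 0 ≤ c) (hc₁ : c ≤ 1)
    (hclimb : ∀ x ∈ D, c ≤ (κ x).real {y | ψ x + h ≤ ψ y}) {T : ℝ} (hT : ∀ x ∈ D, ψ x ≤ T)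
    {w : X → ℝ} (hw : ∀ x ∈ D, Integrable w (κ x)) (hsub : ∀ x ∈ D, w x ≤ ∫ y, w y ∂κ x)
    (hout : ∀ x ∉ D, w x ≤ 0) {S : ℝ} (hS₀ : 0 ≤ S) (hS : ∀ x, w x ≤ S) (n : ℕ) :
    ∀ x, T - n * h < ψ x → w x ≤ S * (1 - c ^ n) := by
  induction n with
  | zero =>
    intro x hx
    have hxD : x ∉ D := fun hxD => (hT x hxD).not_gt (by simpa using hx)
    simpa using hout x hxD
  | succ n ih =>
    intro x hx
    by_cases hxD : x ∈ D
    · have hclimbed : ∀ y, ψ x + h ≤ ψ y → w y ≤ S * (1 - c ^ n) := fun y hy =>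
        ih y (by push_cast at hx; linarith)
      calc w x ≤ ∫ y, w y ∂κ x := hsub x hxD
        _ ≤ S - (S - S * (1 - c ^ n)) * (κ x).real {y | ψ x + h ≤ ψ y} :=
          integral_le_sub_mul_measureReal (hw x hxD) (measurableSet_le measurable_const hψ) hS
            hclimbed
        _ = S - S * c ^ n * (κ x).real {y | ψ x + h ≤ ψ y} := by ring
        _ ≤ S - S * c ^ n * c := by gcongr; exact hclimb x hxD
        _ = S * (1 - c ^ (n + 1)) := by ring
    · exact (hout x hxD).trans (mul_nonneg hS₀ (sub_nonneg.2 (pow_le_one₀ hc₀ hc₁)))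

theorem nonpos_of_le_integral_of_climb (hψ : Measurable ψ) (hD : Bornology.IsBounded (ψ '' D))
    (hh : 0 < h) (hc : 0 < c) (hclimb : ∀ x ∈ D, c ≤ (κ x).real {y | ψ x + h ≤ ψ y})
    {w : X → ℝ} (hbdd : BddAbove (range w)) (hw : ∀ x ∈ D, Integrable w (κ x))
    (hsub : ∀ x ∈ D, w x ≤ ∫ y, w y ∂κ x) (hout : ∀ x ∉ D, w x ≤ 0) (x : X) : w x ≤ 0 := by
  by_contra! hx
  have hxD : x ∈ D := by_contra fun hxD => (hout x hxD).not_gt hx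
  have hc₁ : c ≤ 1 := (hclimb x hxD).trans measureReal_le_one
  obtain ⟨T, hT⟩ := hD.bddAbove
  obtain ⟨B, hB⟩ := hD.bddBelow
  obtain ⟨n, hn⟩ := exists_nat_gt ((T - B) / h)
  rw [div_lt_iff₀ hh] at hn
  set S := ⨆ y, w y
  have hS : ∀ y, w y ≤ S := le_ciSup hbdd
  have hS₀ : 0 < S := hx.trans_le (hS x)
  have hcontract : S ≤ S * (1 - c ^ n) := by
    have : Nonempty X := ⟨x⟩
    refine ciSup_le fun y => ?_
    by_cases hy : y ∈ D
    · refine le_mul_one_sub_pow_of_climb hψ hc.le hc₁ hclimb (fun z hz => hT ⟨z, hz, rfl⟩) hw hsub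
        hout hS₀.le hS n y ?_
      linarith [hB ⟨y, hy, rfl⟩]
    · exact (hout y hy).trans (mul_nonneg hS₀.le (sub_nonneg.2 (pow_le_one₀ hc.le hc₁)))
  linarith [mul_pos hS₀ (pow_pos hc n)]

theorem le_of_le_integral_add_of_climb (hψ : Measurable ψ) (hD : Bornology.IsBounded (ψ '' D))
    (hh : 0 < h) (hc : 0 < c) (hclimb : ∀ x ∈ D, c ≤ (κ x).real {y | ψ x + h ≤ ψ y})
    {g u v : X → ℝ} (hu : ∀ x ∈ D, Integrable u (κ x)) (hub : BddAbove (range u))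
    (hv : ∀ x ∈ D, Integrable v (κ x)) (hvb : BddBelow (range v))
    (hsub : ∀ x ∈ D, u x ≤ (∫ y, u y ∂κ x) + g x) (hsuper : ∀ x ∈ D, (∫ y, v y ∂κ x) + g x ≤ v x)
    (hout : ∀ x ∉ D, u x ≤ v x) : u ≤ v := by
  obtain ⟨M, hM⟩ := hub
  obtain ⟨m, hm⟩ := hvb
  have hbdd : BddAbove (range fun x => u x - v x) :=
    ⟨M - m, forall_mem_range.2 fun x => sub_le_sub (hM ⟨x, rfl⟩) (hm ⟨x, rfl⟩)⟩
  refine fun x => sub_nonpos.1 (nonpos_of_le_integral_of_climb (w := fun x => u x - v x) hψ hD hh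
    hc hclimb hbdd (fun y hy => (hu y hy).sub (hv y hy)) (fun y hy => ?_)
    (fun y hy => sub_nonpos.2 (hout y hy)) x)
  rw [integral_sub (hu y hy) (hv y hy)]
  linarith [hsub y hy, hsuper y hy]

theorem eq_of_eq_integral_add_of_climb (hψ : Measurable ψ) (hD : Bornology.IsBounded (ψ '' D))
    (hh : 0 < h) (hc : 0 < c) (hclimb : ∀ x ∈ D, c ≤ (κ x).real {y | ψ x + h ≤ ψ y})
    {g u v : X → ℝ} (hu : ∀ x ∈ D, Integrable u (κ x)) (hub : Bornology.IsBounded (range u))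
    (hv : ∀ x ∈ D, Integrable v (κ x)) (hvb : Bornology.IsBounded (range v))
    (hueq : ∀ x ∈ D, u x = (∫ y, u y ∂κ x) + g x) (hveq : ∀ x ∈ D, v x = (∫ y, v y ∂κ x) + g x)
    (hout : ∀ x ∉ D, u x = v x) : u = v :=
  le_antisymm
    (le_of_le_integral_add_of_climb hψ hD hh hc hclimb hu hub.bddAbove hv hvb.bddBelow
      (fun x hx => (hueq x hx).le) (fun x hx => (hveq x hx).ge) fun x hx => (hout x hx).le)
    (le_of_le_integral_add_of_climb hψ hD hh hc hclimb hv hvb.bddAbove hu hub.bddBelow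
      (fun x hx => (hveq x hx).le) (fun x hx => (hueq x hx).ge) fun x hx => (hout x hx).ge)

end MaximumPrinciple

theorem isProbabilityMeasure_cond_ball {X : Type*} [PseudoMetricSpace X] [ProperSpace X]
    [MeasurableSpace X] (μ : Measure X) [μ.IsOpenPosMeasure] [IsFiniteMeasureOnCompacts μ]
    {r : ℝ} (hr : 0 < r) (x : X) : IsProbabilityMeasure μ[|ball x r] :=
  cond_isProbabilityMeasure_of_finite (measure_ball_pos μ x hr).ne' measure_ball_lt_top.ne

theorem integrable_of_forall_abs_le {X : Type*} [MeasurableSpace X] {κ : Measure X}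
    [IsFiniteMeasure κ] {w : X → ℝ} (hw : Measurable w) (hb : ∃ M, ∀ y, |w y| ≤ M) :
    Integrable w κ :=
  hb.elim fun M hM => .of_bound hw.aestronglyMeasurable M (.of_forall hM)

theorem setAverage_eq_integral_cond {X F : Type*} [MeasurableSpace X] [NormedAddCommGroup F]
    [NormedSpace ℝ F] (μ : Measure X) (f : X → F) (s : Set X) :
    ⨍ y in s, f y ∂μ = ∫ y, f y ∂μ[|s] :=
  setAverage_eq' μ f s

theorem setAverage_ball_add_const {X : Type*} [PseudoMetricSpace X] [ProperSpace X]
    [MeasurableSpace X] (μ : Measure X) [μ.IsOpenPosMeasure] [IsFiniteMeasureOnCompacts μ]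
    {r : ℝ} (hr : 0 < r) (x : X) {w : X → ℝ} (hw : Measurable w) (hb : ∃ M, ∀ y, |w y| ≤ M)
    (k : ℝ) : ⨍ y in ball x r, (w y + k) ∂μ = (⨍ y in ball x r, w y ∂μ) + k := by
  have := isProbabilityMeasure_cond_ball μ hr x
  simp [setAverage_eq_integral_cond,
    integral_add (integrable_of_forall_abs_le hw hb) (integrable_const k)]

theorem cond_ball_eq_map_add {E : Type*} [SeminormedAddCommGroup E] [MeasurableSpace E]
    [BorelSpace E] (μ : Measure E) [μ.IsAddLeftInvariant] (x : E) (r : ℝ) :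
    μ[|ball x r] = (μ[|ball 0 r]).map (x + ·) := by
  ext s hs
  rw [Measure.map_apply (measurable_const_add x) hs, cond_apply measurableSet_ball,
    cond_apply measurableSet_ball, ← measure_preimage_add μ x (ball x r),
    ← measure_preimage_add μ x (_ ∩ s)]
  simp [preimage_inter, preimage_add_ball]

theorem exists_mem_ball_zero_map_pos {E : Type*} [SeminormedAddCommGroup E] [NormedSpace ℝ E]
    {L : StrongDual ℝ E} (hL : L ≠ 0) {r : ℝ} (hr : 0 < r) : ∃ z ∈ ball (0 : E) r, 0 < L z := by
  obtain ⟨y, hy⟩ : ∃ y, 0 < L y := by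
    obtain ⟨y, hy⟩ := DFunLike.ne_iff.1 hL
    rcases hy.lt_or_gt with hneg | hpos
    · exact ⟨-y, by simpa using hneg⟩
    · exact ⟨y, hpos⟩
  have hsmall : ∀ᶠ t : ℝ in 𝓝[>] 0, t • y ∈ ball 0 r :=
    (ContinuousWithinAt.smul continuousWithinAt_id continuousWithinAt_const).eventually
      (isOpen_ball.mem_nhds (by simpa using hr))
  obtain ⟨t, hty, ht⟩ := (hsmall.and self_mem_nhdsWithin).exists
  exact ⟨t • y, hty, by simpa using mul_pos ht hy⟩

section RandomStep

variable {E : Type*} [NormedAddCommGroup E] [NormedSpace ℝ E] [FiniteDimensional ℝ E]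
  [MeasurableSpace E] [BorelSpace E] (μ : Measure E) [μ.IsAddHaarMeasure] {β ε : ℝ}

theorem exists_forall_le_cond_ball_climb {L : StrongDual ℝ E} (hL : L ≠ 0) (hε : 0 < ε) :
    ∃ h > 0, ∃ c > 0, ∀ x, c ≤ (μ[|ball x ε]).real {y | L x + h ≤ L y} := by
  obtain ⟨z, hz, hLz⟩ := exists_mem_ball_zero_map_pos hL hε
  have := isProbabilityMeasure_cond_ball μ hε 0
  refine ⟨L z / 2, half_pos hLz, (μ[|ball 0 ε]).real {y | L z / 2 ≤ L y}, ?_, fun x => ?_⟩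
  · have hopen : IsOpen (ball 0 ε ∩ {y | L z / 2 < L y}) :=
      isOpen_ball.inter (isOpen_lt continuous_const L.continuous)
    have hpos : 0 < μ (ball 0 ε ∩ {y | L z / 2 ≤ L y}) :=
      (hopen.measure_pos μ ⟨z, hz, half_lt_self hLz⟩).trans_le
        (by gcongr; exact fun hlt => le_of_lt hlt)
    refine ENNReal.toReal_pos ?_ (measure_ne_top _ _)
    rw [cond_apply measurableSet_ball]
    exact mul_ne_zero (ENNReal.inv_ne_zero.2 measure_ball_lt_top.ne) hpos.ne'
  · rw [cond_ball_eq_map_add μ x, map_measureReal_apply (measurable_const_add x)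
      (measurableSet_le measurable_const L.measurable)]
    simp

/-- The law of one step, from `x`, of the random walk behind the dynamic programming principle:
with probability `1 - β` the walk moves to `x + ε • z` with `z` distributed according to `ν`, and
with probability `β` to a uniformly distributed point of `ball x ε`. -/
def stepMeasure (β ε : ℝ) (ν : Measure E) (x : E) : Measure E :=
  ENNReal.ofReal (1 - β) • ν.map (x + ε • ·) + ENNReal.ofReal β • μ[|ball x ε]

theorem isProbabilityMeasure_stepMeasure (hβ : β ∈ Icc 0 1) (hε : 0 < ε) (ν : Measure E)
    [IsProbabilityMeasure ν] (x : E) : IsProbabilityMeasure (stepMeasure μ β ε ν x) := by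
  have := isProbabilityMeasure_cond_ball μ hε x
  have : IsProbabilityMeasure (ν.map (x + ε • ·)) := Measure.isProbabilityMeasure_map (by fun_prop)
  constructor
  simp [stepMeasure, ← ENNReal.ofReal_add (sub_nonneg.2 hβ.2) hβ.1]

theorem integral_stepMeasure (hβ : β ∈ Icc 0 1) (hε : 0 < ε) (ν : Measure E)
    [IsProbabilityMeasure ν] (x : E) {w : E → ℝ} (hw : Measurable w) (hb : ∃ M, ∀ y, |w y| ≤ M) :
    ∫ y, w y ∂stepMeasure μ β ε ν x =
      (1 - β) * ∫ z, w (x + ε • z) ∂ν + β * ⨍ y in ball x ε, w y ∂μ := by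
  have := isProbabilityMeasure_cond_ball μ hε x
  have hshift : Measurable (fun z : E => x + ε • z) := by fun_prop
  rw [stepMeasure, integral_add_measure
      ((integrable_of_forall_abs_le hw hb).smul_measure ENNReal.ofReal_ne_top)
      ((integrable_of_forall_abs_le hw hb).smul_measure ENNReal.ofReal_ne_top),
    integral_smul_measure, integral_smul_measure,
    integral_map hshift.aemeasurable hw.aestronglyMeasurable,
    ENNReal.toReal_ofReal (sub_nonneg.2 hβ.2), ENNReal.toReal_ofReal hβ.1]
  simp only [smul_eq_mul, setAverage_eq_integral_cond]

theorem mul_cond_ball_real_le_stepMeasure_real (hβ : β ∈ Icc 0 1) (hε : 0 < ε) (ν : Measure E)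
    [IsProbabilityMeasure ν] (x : E) (s : Set E) :
    β * (μ[|ball x ε]).real s ≤ (stepMeasure μ β ε ν x).real s := by
  have := isProbabilityMeasure_stepMeasure μ hβ hε ν x
  calc β * (μ[|ball x ε]).real s = (ENNReal.ofReal β • μ[|ball x ε]).real s := by
        rw [measureReal_ennreal_smul_apply, ENNReal.toReal_ofReal hβ.1]
    _ ≤ (stepMeasure μ β ε ν x).real s :=
        ENNReal.toReal_mono (measure_ne_top _ _) (Measure.le_add_left le_rfl s)

theorem DPP_uniqueness_general (hβ : β ∈ Ioc 0 1) (hε : 0 < ε) (ν : E → Measure E)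
    [∀ x, IsProbabilityMeasure (ν x)] {L : StrongDual ℝ E} (hL : L ≠ 0) {D : Set E}
    (hD : Bornology.IsBounded (L '' D)) {g u v : E → ℝ}
    (hu : Measurable u) (hub : ∃ M, ∀ y, |u y| ≤ M)
    (hv : Measurable v) (hvb : ∃ M, ∀ y, |v y| ≤ M) (hagree : ∀ x ∉ D, u x = v x)
    (hDPPu : ∀ x ∈ D, u x = (1 - β) * ∫ z, u (x + ε • z) ∂ν x +
      β * (⨍ y in ball x ε, u y ∂μ) + g x)
    (hDPPv : ∀ x ∈ D, v x = (1 - β) * ∫ z, v (x + ε • z) ∂ν x +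
      β * (⨍ y in ball x ε, v y ∂μ) + g x) :
    u = v := by
  have hβ' := Ioc_subset_Icc_self hβ
  have := fun x => isProbabilityMeasure_stepMeasure μ hβ' hε (ν x) x
  obtain ⟨h, hh, c, hc, hclimb⟩ := exists_forall_le_cond_ball_climb μ hL hε
  have hstep_climb : ∀ x ∈ D,
      β * c ≤ (stepMeasure μ β ε (ν x) x).real {y | L x + h ≤ L y} := fun x _ =>
    (mul_le_mul_of_nonneg_left (hclimb x) hβ.1.le).trans
      (mul_cond_ball_real_le_stepMeasure_real μ hβ' hε (ν x) x _)
  have hbounded {w : E → ℝ} (hw : ∃ M, ∀ y, |w y| ≤ M) : Bornology.IsBounded (range w) :=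
    isBounded_iff_forall_norm_le.2 (by simpa using hw)
  refine eq_of_eq_integral_add_of_climb (κ := fun x => stepMeasure μ β ε (ν x) x) (g := g)
    L.measurable hD hh (mul_pos hβ.1 hc) hstep_climb
    (fun x _ => integrable_of_forall_abs_le hu hub) (hbounded hub)
    (fun x _ => integrable_of_forall_abs_le hv hvb) (hbounded hvb) (fun x hx => ?_)
    (fun x hx => ?_) hagree
  · rw [integral_stepMeasure μ hβ' hε (ν x) x hu hub, hDPPu x hx]
  · rw [integral_stepMeasure μ hβ' hε (ν x) x hv hvb, hDPPv x hx]

end RandomStep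

/-- uniqueness of bounded Borel solutions of the dynamic programming
principle with given boundary values. -/
theorem DPP_uniqueness (N : ℕ) (hN : 1 ≤ N) (Λ β ε : ℝ) (hΛ : 1 ≤ Λ)
    (hβ : β ∈ Set.Ioc (0 : ℝ) 1) (hε : 0 < ε)
    (ν : EuclideanSpace ℝ (Fin N) → Measure (EuclideanSpace ℝ (Fin N)))
    (hprob : ∀ x, IsProbabilityMeasure (ν x))
    (hsupp : ∀ x, ν x (closedBall (0 : EuclideanSpace ℝ (Fin N)) Λ)ᶜ = 0)
    (hsymm : ∀ x (E : Set (EuclideanSpace ℝ (Fin N))), MeasurableSet E → ν x E = ν x (-E))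
    (hmeas : ∀ w : EuclideanSpace ℝ (Fin N) → ℝ, Measurable w → (∃ M, ∀ y, |w y| ≤ M) →
      Measurable fun x => ∫ z, w (x + z) ∂ν x)
    (D : Set (EuclideanSpace ℝ (Fin N))) (hD : IsOpen D) (hDc : IsConnected D)
    (hDb : Bornology.IsBounded D)
    (f u v : EuclideanSpace ℝ (Fin N) → ℝ)
    (hf : Measurable f) (hfb : ∃ M, ∀ y, |f y| ≤ M)
    (hu : Measurable u) (hub : ∃ M, ∀ y, |u y| ≤ M)
    (hv : Measurable v) (hvb : ∃ M, ∀ y, |v y| ≤ M)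
    (hagree : ∀ x ∉ D, u x = v x)
    (hDPPu : ∀ x ∈ D, u x = (1 - β) * ∫ z, u (x + ε • z) ∂ν x +
      β * ⨍ y in ball x ε, u y + ε ^ 2 * f x)
    (hDPPv : ∀ x ∈ D, v x = (1 - β) * ∫ z, v (x + ε • z) ∂ν x +
      β * ⨍ y in ball x ε, v y + ε ^ 2 * f x) :
    ∀ x, u x = v x := by
  have : Nonempty (Fin N) := ⟨⟨0, hN⟩⟩
  obtain ⟨L, hL⟩ := exists_ne (0 : StrongDual ℝ (EuclideanSpace ℝ (Fin N)))
  refine congr_fun (DPP_uniqueness_general volume hβ hε ν hL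
    (L.lipschitz.isBounded_image hDb) (g := fun x => β * (ε ^ 2 * f x)) hu hub hv hvb hagree
    (fun x hx => ?_) (fun x hx => ?_))
  -- The average extends over the source term, which therefore carries a factor `β`.
  · rw [hDPPu x hx, setAverage_ball_add_const volume hε x hu hub, mul_add, add_assoc]
  · rw [hDPPv x hx, setAverage_ball_add_const volume hε x hv hvb, mul_add, add_assoc]
end
end

section
/- Let Ω ⊂ ℝ^N be a bounded domain and let u : ℝ^N → ℝ be a bounded function with u ≤ 0 on ℝ^N ∖ Ω. Then sup_Ω u ≤ (diam Ω + Λε) ( |∇Γ(K_u)| / |B_1| )^{1/N}, where |·| denotes N-dimensional Lebesgue measure, Γ is the concave envelope of u⁺ in Ω̃_{Λε}, K_u is the contact set, and ∇Γ(K_u) is the union of the superdifferentials of Γ over the points of K_u. -/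
open MeasureTheory Metric
open scoped ENNReal RealInnerProductSpace

noncomputable section

/-- The extended domain `Ω̃_{Λε} = {x : dist(x,Ω) < Λε}`. -/
def tildeOmega (N : ℕ) (Λ ε : ℝ) (D : Set (EuclideanSpace ℝ (Fin N))) :
    Set (EuclideanSpace ℝ (Fin N)) :=
  {x | infDist x D < Λ * ε}

/-- `u⁺ = max{u, sup_{ℝᴺ∖Ω} u}`. -/
def uPlus (N : ℕ) (D : Set (EuclideanSpace ℝ (Fin N)))
    (u : EuclideanSpace ℝ (Fin N) → ℝ) : EuclideanSpace ℝ (Fin N) → ℝ :=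
  fun x => max (u x) (sSup (u '' Dᶜ))

open Classical in
/-- The concave envelope of `u⁺` in `Ω̃_{Λε}`, extended by `sup_{ℝᴺ∖Ω} u` outside. -/
def concaveEnvelope (N : ℕ) (Λ ε : ℝ) (D : Set (EuclideanSpace ℝ (Fin N)))
    (u : EuclideanSpace ℝ (Fin N) → ℝ) : EuclideanSpace ℝ (Fin N) → ℝ :=
  fun x =>
    if x ∈ tildeOmega N Λ ε D then
      sInf {v : ℝ | ∃ (ξ : EuclideanSpace ℝ (Fin N)) (c : ℝ),
        (∀ y ∈ tildeOmega N Λ ε D, uPlus N D u y ≤ (inner ℝ ξ y : ℝ) + c) ∧ v = (inner ℝ ξ x : ℝ) + c}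
    else sSup (u '' Dᶜ)

/-- The contact set `K_u`. -/
def contactSet (N : ℕ) (Λ ε : ℝ) (D : Set (EuclideanSpace ℝ (Fin N)))
    (u : EuclideanSpace ℝ (Fin N) → ℝ) : Set (EuclideanSpace ℝ (Fin N)) :=
  {x ∈ closure D |
    Filter.limsup (uPlus N D u) (nhds x) = concaveEnvelope N Λ ε D u x}

/-- The superdifferential of `Γ` at `x` (relative to `Ω̃_{Λε}`). -/
def superDiff (N : ℕ) (tΩ : Set (EuclideanSpace ℝ (Fin N)))
    (Γ : EuclideanSpace ℝ (Fin N) → ℝ) (x : EuclideanSpace ℝ (Fin N)) :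
    Set (EuclideanSpace ℝ (Fin N)) :=
  {ξ | ∀ z ∈ tΩ, Γ z ≤ Γ x + (inner ℝ ξ (z - x) : ℝ)}

/-- `∇Γ(S) = ⋃_{x ∈ S} ∇Γ(x)`. -/
def superDiffSet (N : ℕ) (tΩ : Set (EuclideanSpace ℝ (Fin N)))
    (Γ : EuclideanSpace ℝ (Fin N) → ℝ) (S : Set (EuclideanSpace ℝ (Fin N))) :
    Set (EuclideanSpace ℝ (Fin N)) :=
  ⋃ x ∈ S, superDiff N tΩ Γ x

/-!
Let `R = diam Ω + Λε`, let `m` be the supremum of `u` outside `Ω`, and let `ξ` satisfy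
`R * ‖ξ‖ < sup_Ω u - m`. The upper semicontinuous envelope `x ↦ limsup_{y → x} u⁺(y)`, minus the
linear function `⟪ξ, ·⟫`, attains its maximum over `closure Ω` at some `x`, so the affine function
of slope `ξ` through the envelope's value at `x` dominates `u⁺` on `Ω`. It also dominates `u⁺ = m`
on the rest of `Ω̃_{Λε}`, since its value at a point of `Ω` where `u` is close to `sup_Ω u` is too
large for it to fall below `m` within distance `R`. Hence it dominates `Γ` and meets it at `x`, that
is, `x ∈ K_u` and `ξ ∈ ∇Γ(x)`. So `∇Γ(K_u)` contains the ball of radius `(sup_Ω u - m) / R` about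
the origin.
-/

section UpperEnvelope

open Filter Topology

variable {X α : Type*} [TopologicalSpace X]

lemma isCoboundedUnder_le_nhds [Preorder α] (f : X → α) (x : X) :
    IsCoboundedUnder (· ≤ ·) (𝓝 x) f :=
  ⟨f x, fun _ h ↦ (eventually_map.1 h).self_of_nhds⟩

lemma le_limsup_nhds [ConditionallyCompleteLattice α] {f : X → α} {x : X}
    (hf : IsBoundedUnder (· ≤ ·) (𝓝 x) f) : f x ≤ limsup f (𝓝 x) :=
  le_csInf hf fun _ h ↦ (eventually_map.1 h).self_of_nhds

lemma limsup_nhds_le_of_eventuallyLE [ConditionallyCompleteLinearOrder α] [TopologicalSpace α]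
    [OrderTopology α] {f g : X → α} {x : X} (hfg : f ≤ᶠ[𝓝 x] g) (hg : ContinuousAt g x) :
    limsup f (𝓝 x) ≤ g x :=
  (limsup_le_limsup hfg (isCoboundedUnder_le_nhds f x) hg.isBoundedUnder_le).trans_eq hg.limsup_eq

lemma upperSemicontinuousAt_limsup_nhds [ConditionallyCompleteLinearOrder α] [DenselyOrdered α]
    {f : X → α} {x : X} (hf : IsBoundedUnder (· ≤ ·) (𝓝 x) f) :
    UpperSemicontinuousAt (fun x ↦ limsup f (𝓝 x)) x := by
  intro b hb
  obtain ⟨b', hxb', hb'⟩ := exists_between hb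
  filter_upwards [(eventually_lt_of_limsup_lt hxb' hf).eventually_nhds] with y hy
  exact (limsup_le_of_le (isCoboundedUnder_le_nhds f y) (hy.mono fun _ ↦ le_of_lt)).trans_lt hb'

lemma exists_forall_le_limsup_nhds_add_sub {K : Set X} (hK : IsCompact K) (hKne : K.Nonempty)
    {f g : X → ℝ} (hf : ∀ x ∈ K, IsBoundedUnder (· ≤ ·) (𝓝 x) f) (hg : ContinuousOn g K) :
    ∃ x ∈ K, ∀ y ∈ K, f y ≤ limsup f (𝓝 x) + (g y - g x) := by
  have husc : UpperSemicontinuousOn (fun x ↦ limsup f (𝓝 x) + -g x) K :=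
    UpperSemicontinuousOn.add
      (fun x hx ↦ (upperSemicontinuousAt_limsup_nhds (hf x hx)).upperSemicontinuousWithinAt K)
      hg.neg.upperSemicontinuousOn
  obtain ⟨x, hxK, hmax⟩ := husc.exists_isMaxOn hKne hK
  refine ⟨x, hxK, fun y hy ↦ ?_⟩
  have hyx : limsup f (𝓝 y) + -g y ≤ limsup f (𝓝 x) + -g x := hmax hy
  linarith [le_limsup_nhds (hf y hy)]

end UpperEnvelope

section HaarBall

open Module

variable {E : Type*} [NormedAddCommGroup E] [NormedSpace ℝ E] [FiniteDimensional ℝ E]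
  [Nontrivial E] [MeasurableSpace E] [BorelSpace E] (μ : Measure E) [μ.IsAddHaarMeasure]

lemma ofReal_eq_measure_ball_div_rpow (x : E) {r : ℝ} (hr : 0 ≤ r) :
    ENNReal.ofReal r = (μ (ball x r) / μ (ball 0 1)) ^ ((1 : ℝ) / finrank ℝ E) := by
  have hdim : (finrank ℝ E : ℝ) ≠ 0 := Nat.cast_ne_zero.2 finrank_pos.ne'
  rw [Measure.addHaar_ball μ x hr, ENNReal.mul_div_cancel_right (measure_ball_pos μ 0 one_pos).ne'
    measure_ball_lt_top.ne, ENNReal.ofReal_pow hr, ← ENNReal.rpow_natCast, ← ENNReal.rpow_mul,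
    mul_one_div_cancel hdim, ENNReal.rpow_one]

lemma ofReal_le_measure_div_rpow_of_ball_subset {x : E} {r : ℝ} {s : Set E} (hs : ball x r ⊆ s) :
    ENNReal.ofReal r ≤ (μ s / μ (ball 0 1)) ^ ((1 : ℝ) / finrank ℝ E) := by
  rcases le_total r 0 with hr | hr
  · simp [ENNReal.ofReal_of_nonpos hr]
  · rw [ofReal_eq_measure_ball_div_rpow μ x hr]
    gcongr

end HaarBall

section ConcaveEnvelope

open Filter Set Topology

variable {N : ℕ} {Λ ε : ℝ} {D : Set (EuclideanSpace ℝ (Fin N))}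
  {u : EuclideanSpace ℝ (Fin N) → ℝ} {x y z ξ : EuclideanSpace ℝ (Fin N)}

lemma isOpen_tildeOmega : IsOpen (tildeOmega N Λ ε D) :=
  isOpen_lt (continuous_infDist_pt D) continuous_const

lemma closure_subset_tildeOmega (hΛε : 0 < Λ * ε) : closure D ⊆ tildeOmega N Λ ε D :=
  fun _ hx ↦ (infDist_zero_of_mem_closure hx).trans_lt hΛε

lemma dist_le_of_mem_tildeOmega (hD : Bornology.IsBounded D) (hx : x ∈ D)
    (hy : y ∈ tildeOmega N Λ ε D) : dist y x ≤ diam D + Λ * ε := by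
  obtain ⟨z, hz, hyz⟩ := (infDist_lt_iff ⟨x, hx⟩).1 (show infDist y D < Λ * ε from hy)
  linarith [dist_triangle y z x, dist_le_diam_of_mem hD hz hx]

lemma uPlus_of_notMem (hu : BddAbove (u '' Dᶜ)) (hx : x ∉ D) : uPlus N D u x = sSup (u '' Dᶜ) :=
  max_eq_right (le_csSup hu (mem_image_of_mem u hx))

lemma bddAbove_range_uPlus (hu : BddAbove (range u)) : BddAbove (range (uPlus N D u)) := by
  obtain ⟨M, hM⟩ := hu
  refine ⟨max M (sSup (u '' Dᶜ)), ?_⟩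
  rintro _ ⟨x, rfl⟩
  exact max_le_max_right _ (hM (mem_range_self x))

lemma concaveEnvelope_le {a : ℝ} (h : ∀ y ∈ tildeOmega N Λ ε D, uPlus N D u y ≤ a + ⟪ξ, y - x⟫)
    (hz : z ∈ tildeOmega N Λ ε D) : concaveEnvelope N Λ ε D u z ≤ a + ⟪ξ, z - x⟫ := by
  have hsub (y) : ⟪ξ, y⟫ + (a - ⟪ξ, x⟫) = a + ⟪ξ, y - x⟫ := by rw [inner_sub_right]; ring
  rw [concaveEnvelope, if_pos hz]
  refine csInf_le ⟨uPlus N D u z, ?_⟩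
    ⟨ξ, a - ⟪ξ, x⟫, fun y hy ↦ (h y hy).trans_eq (hsub y).symm, (hsub z).symm⟩
  rintro _ ⟨ζ, c, hζ, rfl⟩
  exact hζ z hz

lemma limsup_uPlus_le_concaveEnvelope (hu : BddAbove (range u)) (hx : x ∈ tildeOmega N Λ ε D) :
    limsup (uPlus N D u) (𝓝 x) ≤ concaveEnvelope N Λ ε D u x := by
  obtain ⟨M, hM⟩ := bddAbove_range_uPlus (D := D) hu
  rw [concaveEnvelope, if_pos hx]
  refine le_csInf ⟨_, 0, M, fun y _ ↦ by simpa using hM (mem_range_self y), rfl⟩ ?_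
  rintro _ ⟨ζ, c, hζ, rfl⟩
  exact limsup_nhds_le_of_eventuallyLE (g := fun y ↦ ⟪ζ, y⟫ + c)
    (mem_of_superset (isOpen_tildeOmega.mem_nhds hx) hζ) (by fun_prop)

lemma mem_superDiffSet_contactSet_of_forall_le (hΛε : 0 < Λ * ε) (hu : BddAbove (range u))
    (hx : x ∈ closure D)
    (h : ∀ y ∈ tildeOmega N Λ ε D, uPlus N D u y ≤ limsup (uPlus N D u) (𝓝 x) + ⟪ξ, y - x⟫) :
    ξ ∈ superDiffSet N (tildeOmega N Λ ε D) (concaveEnvelope N Λ ε D u)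
      (contactSet N Λ ε D u) := by
  have hxT := closure_subset_tildeOmega hΛε hx
  have hcontact : limsup (uPlus N D u) (𝓝 x) = concaveEnvelope N Λ ε D u x :=
    le_antisymm (limsup_uPlus_le_concaveEnvelope hu hxT) (by simpa using concaveEnvelope_le h hxT)
  refine mem_biUnion (show x ∈ contactSet N Λ ε D u from ⟨hx, hcontact⟩) fun z hz ↦ ?_
  exact hcontact ▸ concaveEnvelope_le h hz

lemma uPlus_le_of_forall_mem_le (hD : Bornology.IsBounded D) (hu : BddAbove (u '' Dᶜ)) (hy : y ∈ D)
    (hξ : (diam D + Λ * ε) * ‖ξ‖ ≤ u y - sSup (u '' Dᶜ)) {a : ℝ}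
    (h : ∀ z ∈ D, uPlus N D u z ≤ a + ⟪ξ, z - x⟫) (hz : z ∈ tildeOmega N Λ ε D) :
    uPlus N D u z ≤ a + ⟪ξ, z - x⟫ := by
  by_cases hzD : z ∈ D
  · exact h z hzD
  have hfall : -⟪ξ, z - y⟫ ≤ (diam D + Λ * ε) * ‖ξ‖ := calc
    -⟪ξ, z - y⟫ ≤ ‖ξ‖ * ‖z - y‖ := (neg_le_abs _).trans (abs_real_inner_le_norm ξ (z - y))
    _ ≤ (diam D + Λ * ε) * ‖ξ‖ := by
      rw [← dist_eq_norm, mul_comm]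
      gcongr
      exact dist_le_of_mem_tildeOmega hD hy hz
  calc uPlus N D u z = sSup (u '' Dᶜ) := uPlus_of_notMem hu hzD
    _ ≤ u y + ⟪ξ, z - y⟫ := by linarith
    _ ≤ uPlus N D u y + ⟪ξ, z - y⟫ := by gcongr; exact le_max_left _ _
    _ ≤ a + ⟪ξ, y - x⟫ + ⟪ξ, z - y⟫ := by gcongr; exact h y hy
    _ = a + ⟪ξ, z - x⟫ := by rw [add_assoc, ← inner_add_right, sub_add_sub_cancel']

lemma ball_subset_superDiffSet_contactSet (hΛε : 0 < Λ * ε) (hDne : D.Nonempty)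
    (hD : Bornology.IsBounded D) (hu : BddAbove (range u)) :
    ball 0 ((sSup (u '' D) - sSup (u '' Dᶜ)) / (diam D + Λ * ε)) ⊆
      superDiffSet N (tildeOmega N Λ ε D) (concaveEnvelope N Λ ε D u) (contactSet N Λ ε D u) := by
  intro ξ hξ
  have hR : 0 < diam D + Λ * ε := add_pos_of_nonneg_of_pos diam_nonneg hΛε
  rw [mem_ball_zero_iff, lt_div_iff₀' hR, lt_sub_iff_add_lt] at hξ
  obtain ⟨_, ⟨y, hy, rfl⟩, hξy⟩ := exists_lt_of_lt_csSup (hDne.image u) hξ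
  obtain ⟨x, hx, htouch⟩ := exists_forall_le_limsup_nhds_add_sub hD.isCompact_closure hDne.closure
    (fun _ _ ↦ (bddAbove_range_uPlus (D := D) hu).isBoundedUnder_of_range)
    (show ContinuousOn (fun z ↦ ⟪ξ, z⟫) (closure D) by fun_prop)
  simp only [← inner_sub_right] at htouch
  exact mem_superDiffSet_contactSet_of_forall_le hΛε hu hx fun z hz ↦
    uPlus_le_of_forall_mem_le hD (hu.mono (image_subset_range u _)) hy
      (lt_sub_iff_add_lt.2 hξy).le (fun z hz ↦ htouch z (subset_closure hz)) hz

end ConcaveEnvelope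

theorem sup_le_measure_superdifferential_general {N : ℕ} (hN : 1 ≤ N) {Λ ε : ℝ} (hΛε : 0 < Λ * ε)
    {D : Set (EuclideanSpace ℝ (Fin N))} (hDne : D.Nonempty) (hD : Bornology.IsBounded D)
    {u : EuclideanSpace ℝ (Fin N) → ℝ} (hu : BddAbove (Set.range u)) :
    ENNReal.ofReal (sSup (u '' D) - sSup (u '' Dᶜ)) ≤
      ENNReal.ofReal (diam D + Λ * ε) *
        (volume (superDiffSet N (tildeOmega N Λ ε D) (concaveEnvelope N Λ ε D u)
            (contactSet N Λ ε D u)) /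
          volume (ball (0 : EuclideanSpace ℝ (Fin N)) 1)) ^ ((1 : ℝ) / N) := by
  have : NeZero N := ⟨by lia⟩
  have hR : 0 < diam D + Λ * ε := add_pos_of_nonneg_of_pos diam_nonneg hΛε
  have hball := ofReal_le_measure_div_rpow_of_ball_subset volume
    (ball_subset_superDiffSet_contactSet hΛε hDne hD hu)
  rw [finrank_euclideanSpace_fin] at hball
  rw [← mul_div_cancel₀ (sSup (u '' D) - sSup (u '' Dᶜ)) hR.ne', ENNReal.ofReal_mul hR.le]
  gcongr

/-- `sup_Ω u ≤ (diam Ω + Λε) (|∇Γ(K_u)| / |B₁|)^{1/N}`. -/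
theorem sup_le_measure_superdifferential (N : ℕ) (hN : 1 ≤ N) (Λ ε : ℝ) (hΛ : 1 ≤ Λ)
    (hε : 0 < ε)
    (D : Set (EuclideanSpace ℝ (Fin N))) (hD : IsOpen D) (hDc : IsConnected D)
    (hDb : Bornology.IsBounded D)
    (u : EuclideanSpace ℝ (Fin N) → ℝ) (hub : ∃ M, ∀ y, |u y| ≤ M)
    (hu0 : ∀ x ∉ D, u x ≤ 0) :
    ENNReal.ofReal (sSup (u '' D)) ≤
      ENNReal.ofReal (diam D + Λ * ε) *
        (volume (superDiffSet N (tildeOmega N Λ ε D) (concaveEnvelope N Λ ε D u)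
            (contactSet N Λ ε D u)) /
          volume (ball (0 : EuclideanSpace ℝ (Fin N)) 1)) ^ ((1 : ℝ) / N) := by
  have hu : BddAbove (Set.range u) :=
    hub.imp fun M hM ↦ Set.forall_mem_range.2 fun y ↦ (le_abs_self _).trans (hM y)
  have hout : sSup (u '' Dᶜ) ≤ 0 := Real.sSup_nonpos (Set.forall_mem_image.2 hu0)
  exact (ENNReal.ofReal_le_ofReal (by linarith)).trans
    (sup_le_measure_superdifferential_general hN (by positivity) hDc.nonempty hDb hu)
end
end

section
/- Let Q₁ ⊂ ℝ^N be an open cube of side length 1, let A ⊆ Q₁ be Lebesgue measurable, let 0 < δ̃ < δ < 1 with |A| ≤ δ, and let L ∈ ℕ. Then there exists a finite family 𝒬_B of pairwise disjoint open dyadic subcubes of Q₁, each of generation at most L, such that: (i) |A ∩ Q| ≤ δ|Q| for every Q ∈ 𝒬_B; (ii) every Q ∈ 𝒬_B either contains a dyadic subcube Q' of the next generation with |A ∩ Q'| > δ|Q'|, or has generation exactly L and satisfies |A ∩ Q| > δ̃|Q|; and (iii) |A| ≤ δ|B| + δ̃, where B is the union of the cubes in 𝒬_B. -/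
open MeasureTheory Metric
open scoped ENNReal

noncomputable section

/-- The open dyadic subcube of generation `ℓ` with index `m ∈ {0,…,2^ℓ−1}ᴺ` of the open
unit cube with lower corner `b`. -/
def dyadicCube (N : ℕ) (b : EuclideanSpace ℝ (Fin N)) (ℓ : ℕ) (m : Fin N → ℕ) :
    Set (EuclideanSpace ℝ (Fin N)) :=
  {x | ∀ i, b i + (m i : ℝ) / 2 ^ ℓ < x i ∧ x i < b i + ((m i : ℝ) + 1) / 2 ^ ℓ}

/-!
Starting from `Q₁`, bisect a cube if all its children have density at most `δ`, and select it
otherwise; after `L` bisections, select the cubes of density more than `δ'`. Every cube reached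
has density at most `δ`, so the selected cubes carry mass at most `δ |B|`. The discarded cubes are
disjoint and of density at most `δ'`, so they carry mass at most `δ' |Q₁|`. Nothing else is lost,
since each bisection only removes a null set of faces. The argument works for the density of any
measure `ν` not charging coordinate hyperplanes with respect to any measure `μ`; here `μ = volume`
and `ν` is its restriction to `A`.
-/

section DyadicCubes

variable {N : ℕ} (b : EuclideanSpace ℝ (Fin N)) (ℓ : ℕ) (m : Fin N → ℕ)

theorem dyadicCube_eq_preimage_pi :
    dyadicCube N b ℓ m = WithLp.ofLp ⁻¹' Set.univ.pi fun i =>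
      Set.Ioo (b i + (m i : ℝ) / 2 ^ ℓ) (b i + ((m i : ℝ) + 1) / 2 ^ ℓ) := by
  ext x
  simp [dyadicCube]

theorem measurableSet_dyadicCube : MeasurableSet (dyadicCube N b ℓ m) := by
  rw [dyadicCube_eq_preimage_pi]
  exact (PiLp.volume_preserving_ofLp (Fin N)).measurable
    (MeasurableSet.univ_pi fun _ => measurableSet_Ioo)

theorem volume_dyadicCube :
    volume (dyadicCube N b ℓ m) = ENNReal.ofReal (1 / 2 ^ ℓ) ^ N := by
  have side_length (i : Fin N) :
      b i + ((m i : ℝ) + 1) / 2 ^ ℓ - (b i + (m i : ℝ) / 2 ^ ℓ) = 1 / 2 ^ ℓ := by ring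
  rw [dyadicCube_eq_preimage_pi, (PiLp.volume_preserving_ofLp (Fin N)).measure_preimage
    (MeasurableSet.univ_pi fun _ => measurableSet_Ioo).nullMeasurableSet, Real.volume_pi_Ioo]
  simp only [side_length, Finset.prod_const, Finset.card_univ, Fintype.card_fin]

theorem volume_setOf_apply_eq (i : Fin N) (c : ℝ) :
    volume {x : EuclideanSpace ℝ (Fin N) | x i = c} = 0 := by
  have hyperplane_meas : MeasurableSet {y : Fin N → ℝ | y i = c} :=
    measurableSet_eq_fun (measurable_pi_apply i) measurable_const
  calc volume {x : EuclideanSpace ℝ (Fin N) | x i = c}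
      = volume {y : Fin N → ℝ | y i = c} :=
        (PiLp.volume_preserving_ofLp (Fin N)).measure_preimage hyperplane_meas.nullMeasurableSet
    _ = 0 := Measure.pi_hyperplane (fun _ : Fin N => (volume : Measure ℝ)) i c

variable {m} in
theorem disjoint_dyadicCube {m' : Fin N → ℕ} (hne : m ≠ m') :
    Disjoint (dyadicCube N b ℓ m) (dyadicCube N b ℓ m') := by
  refine Set.disjoint_left.mpr fun x hx hx' => hne (funext fun i => ?_)
  have index_le {n n' : ℕ} (hn : b i + (n : ℝ) / 2 ^ ℓ < x i)
      (hn' : x i < b i + ((n' : ℝ) + 1) / 2 ^ ℓ) : n ≤ n' := by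
    have hlt : (n : ℝ) / 2 ^ ℓ < ((n' : ℝ) + 1) / 2 ^ ℓ := by linarith
    rw [div_lt_div_iff_of_pos_right (by positivity)] at hlt
    exact Nat.lt_succ_iff.mp (by exact_mod_cast hlt)
  exact le_antisymm (index_le (hx i).1 (hx' i).2) (index_le (hx' i).1 (hx i).2)

/-- The indices of the `2 ^ N` dyadic subcubes of the next generation of the cube with index `m`. -/
def childIndices : Finset (Fin N → ℕ) :=
  Fintype.piFinset fun i => {2 * m i, 2 * m i + 1}

variable {m} in
theorem mem_childIndices {m' : Fin N → ℕ} :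
    m' ∈ childIndices m ↔ ∀ i, m' i = 2 * m i ∨ m' i = 2 * m i + 1 := by
  simp [childIndices]

variable {b ℓ m} in
theorem mem_dyadicCube_iff_succ {x : EuclideanSpace ℝ (Fin N)} :
    x ∈ dyadicCube N b ℓ m ↔ ∀ i, b i + 2 * (m i : ℝ) / 2 ^ (ℓ + 1) < x i ∧
      x i < b i + 2 * ((m i : ℝ) + 1) / 2 ^ (ℓ + 1) := by
  simp only [pow_succ', mul_div_mul_left _ _ (two_ne_zero (α := ℝ))]
  rfl

variable {m} in
theorem dyadicCube_subset_of_mem_childIndices {m' : Fin N → ℕ} (hm' : m' ∈ childIndices m) :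
    dyadicCube N b (ℓ + 1) m' ⊆ dyadicCube N b ℓ m := by
  refine fun x hx => mem_dyadicCube_iff_succ.mpr fun i => ?_
  have lower_le : 2 * (m i : ℝ) ≤ m' i := by
    have := mem_childIndices.mp hm' i
    exact_mod_cast (by omega : 2 * m i ≤ m' i)
  have le_upper : (m' i : ℝ) + 1 ≤ 2 * ((m i : ℝ) + 1) := by
    have := mem_childIndices.mp hm' i
    exact_mod_cast (by omega : m' i + 1 ≤ 2 * (m i + 1))
  exact ⟨lt_of_le_of_lt (by gcongr) (hx i).1, (hx i).2.trans_le (by gcongr)⟩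

theorem dyadicCube_diff_iUnion_childIndices_subset :
    dyadicCube N b ℓ m \ ⋃ m' ∈ childIndices m, dyadicCube N b (ℓ + 1) m' ⊆
      ⋃ i, {x | x i = b i + (2 * (m i : ℝ) + 1) / 2 ^ (ℓ + 1)} := by
  rintro x ⟨hx, hxchild⟩
  rw [mem_dyadicCube_iff_succ] at hx
  by_contra hxmid
  simp only [Set.mem_iUnion, Set.mem_ofPred_eq, not_exists] at hxmid
  have half_containing (i : Fin N) : ∃ n : ℕ, (n = 2 * m i ∨ n = 2 * m i + 1) ∧
      b i + (n : ℝ) / 2 ^ (ℓ + 1) < x i ∧ x i < b i + ((n : ℝ) + 1) / 2 ^ (ℓ + 1) := by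
    rcases lt_or_gt_of_ne (hxmid i) with hlt | hgt
    · exact ⟨2 * m i, .inl rfl, by simpa using (hx i).1, by simpa using hlt⟩
    · refine ⟨2 * m i + 1, .inr rfl, by simpa using hgt, (hx i).2.trans_eq ?_⟩
      push_cast
      ring
  choose m' hm' hxm' using half_containing
  exact hxchild (Set.mem_biUnion (mem_childIndices.mpr hm') hxm')

theorem measure_dyadicCube_le_sum_childIndices {ν : Measure (EuclideanSpace ℝ (Fin N))}
    (hν : ∀ i c, ν {x | x i = c} = 0) :
    ν (dyadicCube N b ℓ m) ≤ ∑ m' ∈ childIndices m, ν (dyadicCube N b (ℓ + 1) m') := by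
  have ae_covered : dyadicCube N b ℓ m ≤ᵐ[ν]
      (⋃ m' ∈ childIndices m, dyadicCube N b (ℓ + 1) m' : Set _) :=
    ae_le_set.mpr (measure_mono_null (dyadicCube_diff_iUnion_childIndices_subset b ℓ m)
      (measure_iUnion_null fun i => hν i _))
  exact (measure_mono_ae ae_covered).trans (measure_biUnion_finset_le _ _)

theorem sum_measure_eq_measure_biUnion_of_subset_dyadicCube (μ : Measure (EuclideanSpace ℝ (Fin N)))
    {I : Finset (Fin N → ℕ)} {B : (Fin N → ℕ) → Set (EuclideanSpace ℝ (Fin N))}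
    (hB : ∀ m ∈ I, MeasurableSet (B m)) (hsub : ∀ m ∈ I, B m ⊆ dyadicCube N b ℓ m) :
    ∑ m ∈ I, μ (B m) = μ (⋃ m ∈ I, B m) :=
  (measure_biUnion_finset (fun m hm m' hm' hne =>
    (disjoint_dyadicCube b ℓ hne).mono (hsub m hm) (hsub m' hm')) hB).symm

theorem sum_measure_childIndices_le (μ : Measure (EuclideanSpace ℝ (Fin N))) :
    ∑ m' ∈ childIndices m, μ (dyadicCube N b (ℓ + 1) m') ≤ μ (dyadicCube N b ℓ m) := by
  rw [sum_measure_eq_measure_biUnion_of_subset_dyadicCube b (ℓ + 1) μ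
    (fun _ _ => measurableSet_dyadicCube b _ _) fun _ _ => subset_rfl]
  exact measure_mono (Set.iUnion₂_subset fun _ => dyadicCube_subset_of_mem_childIndices b ℓ)

end DyadicCubes

section Stopping

variable {N : ℕ} (b : EuclideanSpace ℝ (Fin N)) (μ ν : Measure (EuclideanSpace ℝ (Fin N)))
  (δ δ' : ℝ≥0∞)

open Classical in
/-- The cubes selected by the stopping-time algorithm run for `k` more generations inside the cube
of generation `ℓ` with index `m`: a cube is selected once one of its children `Q'` satisfies
`δ * μ Q' < ν Q'`, and bisected otherwise; in the last generation, the cubes `Q` with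
`δ' * μ Q < ν Q` are selected. A cube is encoded by its generation and its index. -/
def stoppingCubes : ℕ → ℕ → (Fin N → ℕ) → Finset (ℕ × (Fin N → ℕ))
  | 0, ℓ, m => if δ' * μ (dyadicCube N b ℓ m) < ν (dyadicCube N b ℓ m) then {(ℓ, m)} else ∅
  | k + 1, ℓ, m =>
    if ∃ m' ∈ childIndices m, δ * μ (dyadicCube N b (ℓ + 1) m') < ν (dyadicCube N b (ℓ + 1) m')
    then {(ℓ, m)} else (childIndices m).biUnion (stoppingCubes k (ℓ + 1))

variable {b μ ν δ δ'} {k ℓ : ℕ} {m : Fin N → ℕ} {p : ℕ × (Fin N → ℕ)}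

theorem mem_stoppingCubes_zero :
    p ∈ stoppingCubes b μ ν δ δ' 0 ℓ m ↔
      δ' * μ (dyadicCube N b ℓ m) < ν (dyadicCube N b ℓ m) ∧ p = (ℓ, m) := by
  rw [stoppingCubes]
  split_ifs with hlast <;> simp [hlast]

theorem mem_stoppingCubes_succ :
    p ∈ stoppingCubes b μ ν δ δ' (k + 1) ℓ m ↔
      (∃ m' ∈ childIndices m,
        δ * μ (dyadicCube N b (ℓ + 1) m') < ν (dyadicCube N b (ℓ + 1) m')) ∧ p = (ℓ, m) ∨
      (∀ m' ∈ childIndices m,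
        ν (dyadicCube N b (ℓ + 1) m') ≤ δ * μ (dyadicCube N b (ℓ + 1) m')) ∧
        ∃ m' ∈ childIndices m, p ∈ stoppingCubes b μ ν δ δ' k (ℓ + 1) m' := by
  rw [stoppingCubes]
  split_ifs with hdense
  · have not_sparse : ¬ ∀ m' ∈ childIndices m,
        ν (dyadicCube N b (ℓ + 1) m') ≤ δ * μ (dyadicCube N b (ℓ + 1) m') := by
      push Not
      exact hdense
    simp only [hdense, not_sparse, Finset.mem_singleton, true_and, false_and, or_false]
  · have sparse : ∀ m' ∈ childIndices m,
        ν (dyadicCube N b (ℓ + 1) m') ≤ δ * μ (dyadicCube N b (ℓ + 1) m') := by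
      push Not at hdense
      exact hdense
    simp only [hdense, Finset.mem_biUnion, false_and, false_or, and_iff_right sparse]

theorem dyadicCube_subset_of_mem_stoppingCubes (hp : p ∈ stoppingCubes b μ ν δ δ' k ℓ m) :
    dyadicCube N b p.1 p.2 ⊆ dyadicCube N b ℓ m := by
  induction k generalizing ℓ m with
  | zero => rw [(mem_stoppingCubes_zero.mp hp).2]
  | succ k ih =>
    rcases mem_stoppingCubes_succ.mp hp with ⟨-, rfl⟩ | ⟨-, m', hm', hp'⟩
    · rfl
    · exact (ih hp').trans (dyadicCube_subset_of_mem_childIndices b ℓ hm')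

theorem generation_le_of_mem_stoppingCubes (hp : p ∈ stoppingCubes b μ ν δ δ' k ℓ m) :
    p.1 ≤ ℓ + k := by
  induction k generalizing ℓ m with
  | zero => rw [(mem_stoppingCubes_zero.mp hp).2, add_zero]
  | succ k ih =>
    rcases mem_stoppingCubes_succ.mp hp with ⟨-, rfl⟩ | ⟨-, m', -, hp'⟩
    · exact Nat.le_add_right ℓ (k + 1)
    · exact (ih hp').trans_eq (by ring)

theorem index_lt_of_mem_stoppingCubes (hm : ∀ i, m i < 2 ^ ℓ)
    (hp : p ∈ stoppingCubes b μ ν δ δ' k ℓ m) (i : Fin N) : p.2 i < 2 ^ p.1 := by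
  induction k generalizing ℓ m with
  | zero =>
    rw [(mem_stoppingCubes_zero.mp hp).2]
    exact hm i
  | succ k ih =>
    rcases mem_stoppingCubes_succ.mp hp with ⟨-, rfl⟩ | ⟨-, m', hm', hp'⟩
    · exact hm i
    · refine ih (fun j => ?_) hp'
      have hj := hm j
      have hj' := mem_childIndices.mp hm' j
      rw [pow_succ]
      omega

theorem measure_le_of_mem_stoppingCubes
    (hQ : ν (dyadicCube N b ℓ m) ≤ δ * μ (dyadicCube N b ℓ m))
    (hp : p ∈ stoppingCubes b μ ν δ δ' k ℓ m) :
    ν (dyadicCube N b p.1 p.2) ≤ δ * μ (dyadicCube N b p.1 p.2) := by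
  induction k generalizing ℓ m with
  | zero =>
    rw [(mem_stoppingCubes_zero.mp hp).2]
    exact hQ
  | succ k ih =>
    rcases mem_stoppingCubes_succ.mp hp with ⟨-, rfl⟩ | ⟨hchild, m', hm', hp'⟩
    · exact hQ
    · exact ih (hchild m' hm') hp'

theorem exists_dense_child_or_dense_of_mem_stoppingCubes
    (hp : p ∈ stoppingCubes b μ ν δ δ' k ℓ m) :
    (∃ m' ∈ childIndices p.2,
      δ * μ (dyadicCube N b (p.1 + 1) m') < ν (dyadicCube N b (p.1 + 1) m')) ∨
    (p.1 = ℓ + k ∧ δ' * μ (dyadicCube N b p.1 p.2) < ν (dyadicCube N b p.1 p.2)) := by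
  induction k generalizing ℓ m with
  | zero =>
    obtain ⟨hlast, rfl⟩ := mem_stoppingCubes_zero.mp hp
    exact .inr ⟨rfl, hlast⟩
  | succ k ih =>
    rcases mem_stoppingCubes_succ.mp hp with ⟨hdense, rfl⟩ | ⟨-, m', -, hp'⟩
    · exact .inl hdense
    · simpa only [add_right_comm, add_assoc] using ih hp'

theorem pairwiseDisjoint_stoppingCubes :
    (stoppingCubes b μ ν δ δ' k ℓ m : Set (ℕ × (Fin N → ℕ))).PairwiseDisjoint
      fun p => dyadicCube N b p.1 p.2 := by
  induction k generalizing ℓ m with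
  | zero =>
    intro p hp q hq hpq
    exact absurd ((mem_stoppingCubes_zero.mp hp).2.trans (mem_stoppingCubes_zero.mp hq).2.symm) hpq
  | succ k ih =>
    intro p hp q hq hpq
    rcases mem_stoppingCubes_succ.mp hp with ⟨hdense, rfl⟩ | ⟨hchild, m₁, -, hp'⟩ <;>
      rcases mem_stoppingCubes_succ.mp hq with ⟨hdense', rfl⟩ | ⟨hchild', m₂, -, hq'⟩
    · exact absurd rfl hpq
    · obtain ⟨m', hm', hlt⟩ := hdense
      exact absurd hlt (hchild' m' hm').not_gt
    · obtain ⟨m', hm', hlt⟩ := hdense'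
      exact absurd hlt (hchild m' hm').not_gt
    · rcases eq_or_ne m₁ m₂ with rfl | hne
      · exact ih hp' hq' hpq
      · exact (disjoint_dyadicCube b (ℓ + 1) hne).mono
          (dyadicCube_subset_of_mem_stoppingCubes hp') (dyadicCube_subset_of_mem_stoppingCubes hq')

theorem biUnion_stoppingCubes_subset :
    ⋃ p ∈ stoppingCubes b μ ν δ δ' k ℓ m, dyadicCube N b p.1 p.2 ⊆ dyadicCube N b ℓ m :=
  Set.iUnion₂_subset fun _ => dyadicCube_subset_of_mem_stoppingCubes

theorem sum_measure_biUnion_stoppingCubes_le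
    (hsparse : ∀ m' ∈ childIndices m,
      ν (dyadicCube N b (ℓ + 1) m') ≤ δ * μ (dyadicCube N b (ℓ + 1) m')) :
    ∑ m' ∈ childIndices m,
        μ (⋃ p ∈ stoppingCubes b μ ν δ δ' k (ℓ + 1) m', dyadicCube N b p.1 p.2) ≤
      μ (⋃ p ∈ stoppingCubes b μ ν δ δ' (k + 1) ℓ m, dyadicCube N b p.1 p.2) := by
  rw [sum_measure_eq_measure_biUnion_of_subset_dyadicCube b (ℓ + 1) μ
    (fun _ _ => Finset.measurableSet_biUnion _ fun _ _ => measurableSet_dyadicCube b _ _)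
    fun _ _ => biUnion_stoppingCubes_subset]
  exact measure_mono (Set.iUnion₂_subset fun m' hm' => Set.biUnion_subset_biUnion_left
    fun p hp => mem_stoppingCubes_succ.mpr (.inr ⟨hsparse, m', hm', hp⟩))

theorem measure_dyadicCube_le_add_of_self_mem
    (hQ : ν (dyadicCube N b ℓ m) ≤ δ * μ (dyadicCube N b ℓ m))
    (hself : (ℓ, m) ∈ stoppingCubes b μ ν δ δ' k ℓ m) :
    ν (dyadicCube N b ℓ m) ≤
      δ * μ (⋃ p ∈ stoppingCubes b μ ν δ δ' k ℓ m, dyadicCube N b p.1 p.2) +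
        δ' * μ (dyadicCube N b ℓ m) := by
  refine le_add_right (hQ.trans ?_)
  gcongr
  exact Set.subset_biUnion_of_mem (u := fun p => dyadicCube N b p.1 p.2) hself

theorem measure_dyadicCube_le_add (hν : ∀ i c, ν {x | x i = c} = 0)
    (hQ : ν (dyadicCube N b ℓ m) ≤ δ * μ (dyadicCube N b ℓ m)) :
    ν (dyadicCube N b ℓ m) ≤
      δ * μ (⋃ p ∈ stoppingCubes b μ ν δ δ' k ℓ m, dyadicCube N b p.1 p.2) +
        δ' * μ (dyadicCube N b ℓ m) := by
  induction k generalizing ℓ m with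
  | zero =>
    by_cases hlast : δ' * μ (dyadicCube N b ℓ m) < ν (dyadicCube N b ℓ m)
    · exact measure_dyadicCube_le_add_of_self_mem hQ (mem_stoppingCubes_zero.mpr ⟨hlast, rfl⟩)
    · exact le_add_left (not_lt.mp hlast)
  | succ k ih =>
    by_cases hdense : ∃ m' ∈ childIndices m,
        δ * μ (dyadicCube N b (ℓ + 1) m') < ν (dyadicCube N b (ℓ + 1) m')
    · exact measure_dyadicCube_le_add_of_self_mem hQ
        (mem_stoppingCubes_succ.mpr (.inl ⟨hdense, rfl⟩))
    · push Not at hdense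
      calc ν (dyadicCube N b ℓ m)
          ≤ ∑ m' ∈ childIndices m, ν (dyadicCube N b (ℓ + 1) m') :=
            measure_dyadicCube_le_sum_childIndices b ℓ m hν
        _ ≤ ∑ m' ∈ childIndices m,
              (δ * μ (⋃ p ∈ stoppingCubes b μ ν δ δ' k (ℓ + 1) m', dyadicCube N b p.1 p.2) +
                δ' * μ (dyadicCube N b (ℓ + 1) m')) :=
            Finset.sum_le_sum fun m' hm' => ih (hdense m' hm')
        _ = δ * ∑ m' ∈ childIndices m,
                μ (⋃ p ∈ stoppingCubes b μ ν δ δ' k (ℓ + 1) m', dyadicCube N b p.1 p.2) +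
              δ' * ∑ m' ∈ childIndices m, μ (dyadicCube N b (ℓ + 1) m') := by
            rw [Finset.sum_add_distrib, ← Finset.mul_sum, ← Finset.mul_sum]
        _ ≤ δ * μ (⋃ p ∈ stoppingCubes b μ ν δ δ' (k + 1) ℓ m, dyadicCube N b p.1 p.2) +
              δ' * μ (dyadicCube N b ℓ m) := by
            gcongr
            · exact sum_measure_biUnion_stoppingCubes_le hdense
            · exact sum_measure_childIndices_le b ℓ m μ

end Stopping

theorem calderon_zygmund_general {N : ℕ} (b : EuclideanSpace ℝ (Fin N))
    (μ ν : Measure (EuclideanSpace ℝ (Fin N))) (hν : ∀ i c, ν {x | x i = c} = 0)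
    (δ' δ : ℝ≥0∞)
    (hQ : ν (dyadicCube N b 0 (fun _ => 0)) ≤ δ * μ (dyadicCube N b 0 (fun _ => 0))) (L : ℕ) :
    ∃ 𝒬 : Finset (ℕ × (Fin N → ℕ)),
      (∀ p ∈ 𝒬, p.1 ≤ L ∧ ∀ i, p.2 i < 2 ^ p.1) ∧
      (∀ p ∈ 𝒬, ∀ q ∈ 𝒬, p ≠ q →
        Disjoint (dyadicCube N b p.1 p.2) (dyadicCube N b q.1 q.2)) ∧
      (∀ p ∈ 𝒬, ν (dyadicCube N b p.1 p.2) ≤ δ * μ (dyadicCube N b p.1 p.2)) ∧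
      (∀ p ∈ 𝒬,
        (∃ m' : Fin N → ℕ, (∀ i, m' i = 2 * p.2 i ∨ m' i = 2 * p.2 i + 1) ∧
          δ * μ (dyadicCube N b (p.1 + 1) m') < ν (dyadicCube N b (p.1 + 1) m')) ∨
        (p.1 = L ∧ δ' * μ (dyadicCube N b p.1 p.2) < ν (dyadicCube N b p.1 p.2))) ∧
      ν (dyadicCube N b 0 (fun _ => 0)) ≤
        δ * μ (⋃ p ∈ (𝒬 : Set (ℕ × (Fin N → ℕ))), dyadicCube N b p.1 p.2) +
          δ' * μ (dyadicCube N b 0 (fun _ => 0)) := by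
  refine ⟨stoppingCubes b μ ν δ δ' L 0 (fun _ => 0), fun p hp => ⟨?_, ?_⟩,
    fun p hp q hq => pairwiseDisjoint_stoppingCubes hp hq,
    fun p => measure_le_of_mem_stoppingCubes hQ, fun p hp => ?_, measure_dyadicCube_le_add hν hQ⟩
  · simpa only [zero_add] using generation_le_of_mem_stoppingCubes hp
  · exact index_lt_of_mem_stoppingCubes (fun _ => by simp) hp
  · simpa only [zero_add, mem_childIndices] using
      exists_dense_child_or_dense_of_mem_stoppingCubes hp


/-- Calderón–Zygmund type decomposition stopped at generation `L`. -/
theorem calderon_zygmund (N : ℕ) (hN : 1 ≤ N) (b : EuclideanSpace ℝ (Fin N))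
    (A : Set (EuclideanSpace ℝ (Fin N))) (hA : MeasurableSet A)
    (hAQ : A ⊆ dyadicCube N b 0 (fun _ => 0))
    (δ' δ : ℝ) (hδ'0 : 0 < δ') (hδ'δ : δ' < δ) (hδ1 : δ < 1)
    (hAδ : volume A ≤ ENNReal.ofReal δ) (L : ℕ) :
    ∃ 𝒬 : Finset (ℕ × (Fin N → ℕ)),
      (∀ p ∈ 𝒬, p.1 ≤ L ∧ ∀ i, p.2 i < 2 ^ p.1) ∧
      (∀ p ∈ 𝒬, ∀ q ∈ 𝒬, p ≠ q →
        Disjoint (dyadicCube N b p.1 p.2) (dyadicCube N b q.1 q.2)) ∧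
      (∀ p ∈ 𝒬, volume (A ∩ dyadicCube N b p.1 p.2) ≤
        ENNReal.ofReal δ * volume (dyadicCube N b p.1 p.2)) ∧
      (∀ p ∈ 𝒬,
        (∃ m' : Fin N → ℕ, (∀ i, m' i = 2 * p.2 i ∨ m' i = 2 * p.2 i + 1) ∧
          ENNReal.ofReal δ * volume (dyadicCube N b (p.1 + 1) m') <
            volume (A ∩ dyadicCube N b (p.1 + 1) m')) ∨
        (p.1 = L ∧ ENNReal.ofReal δ' * volume (dyadicCube N b p.1 p.2) <
          volume (A ∩ dyadicCube N b p.1 p.2))) ∧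
      volume A ≤
        ENNReal.ofReal δ * volume (⋃ p ∈ (𝒬 : Set (ℕ × (Fin N → ℕ))), dyadicCube N b p.1 p.2) +
          ENNReal.ofReal δ' := by
  have restrict_apply (ℓ : ℕ) (m : Fin N → ℕ) :
      volume.restrict A (dyadicCube N b ℓ m) = volume (A ∩ dyadicCube N b ℓ m) := by
    rw [Measure.restrict_apply (measurableSet_dyadicCube b ℓ m), Set.inter_comm]
  have volume_unit : volume (dyadicCube N b 0 (fun _ => 0)) = 1 := by simp [volume_dyadicCube]
  simpa only [restrict_apply, volume_unit, Set.inter_eq_left.mpr hAQ, mul_one] using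
    calderon_zygmund_general b volume (volume.restrict A)
      (fun i c => Measure.absolutelyContinuous_restrict (volume_setOf_apply_eq i c))
      (ENNReal.ofReal δ') (ENNReal.ofReal δ)
      (by simpa only [restrict_apply, volume_unit, Set.inter_eq_left.mpr hAQ, mul_one]) L
end
end
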